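/- For every integer α with 5 ≤ α ≤ 12 and every nonnegative integer N, the equation x² + 5y² + αz² + 2(3t² − 2t) = N has an integer solution in ℤ⁴; and for every integer β with 2 ≤ β ≤ 12 and every nonnegative integer N, the equation x² + 5y² + 2(3z² − 2z) + β(3t² − 2t) = N has an integer solution in ℤ⁴. That is, the quaternary mixed sums x²+5y²+αz²+2P₈(t) (5 ≤ α ≤ 12) and x²+5y²+2P₈(z)+βP₈(t) (2 ≤ β ≤ 12) are universal. -/

import Mathlib

/-!
Multiplied by `3` or `6`, a representation by either sum becomes one by a diagonal form in which
certain variables must be prime to `3`, since `3P₈(x) + 1 = (3x - 1)²`. Integral linear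
substitutions reduce these forms to `x² + y² + z²`, `x² + y² + 5z²` and `x² + 5y² + 10z²`, and
those are handled by Dirichlet's method: a ternary form of discriminant `1` (resp. `10`) that takes
the value `k` (resp. `5k`) is built from a prime in a suitable arithmetic progression, and reduction
theory identifies its class.

The ternary sum `x² + 5y² + 2P₈(z)` takes all even values outside a few residue classes modulo
`256`. If the fourth coefficient is odd or `N` is even, some small value of the fourth variable
therefore leaves such a number, up to one descent step for `β = 10`. If the coefficient is even and
`N` is odd, the remainder is always odd and each coefficient needs its own form. Divisibility by `3`
is avoided by sign changes, by reflections, and by multiplication with elements of norm `9` in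
`ℤ[√-2]` and `ℤ[√-5]`.
-/

/-! ### Reduction of positive ternary forms -/

theorem exists_two_mul_abs_add_mul_le {a : ℤ} (ha : 0 < a) (f : ℤ) :
    ∃ t : ℤ, 2 * |f + t * a| ≤ a := by
  refine ⟨-round ((f : ℚ) / a), ?_⟩
  have ha' : (0 : ℚ) < a := by exact_mod_cast ha
  have hround := abs_sub_round ((f : ℚ) / a)
  have hscale : ((f + -round ((f : ℚ) / a) * a : ℤ) : ℚ) =
      ((f : ℚ) / a - round ((f : ℚ) / a)) * a := by
    push_cast
    field_simp
    ring
  have : (2 : ℚ) * |((f + -round ((f : ℚ) / a) * a : ℤ) : ℚ)| ≤ a := by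
    rw [hscale, abs_mul, abs_of_pos ha']
    nlinarith
  exact_mod_cast this

/-- The ternary quadratic form `a x² + b y² + c z² + 2d yz + 2e xz + 2f xy`, encoded by the entries
of its Gram matrix; only forms with even cross terms are needed. -/
structure TernaryForm where
  (a b c d e f : ℤ)

namespace TernaryForm

/-- The value of a ternary form at an integral vector. -/
def eval (q : TernaryForm) (v : ℤ × ℤ × ℤ) : ℤ :=
  q.a * v.1 ^ 2 + q.b * v.2.1 ^ 2 + q.c * v.2.2 ^ 2 + 2 * q.d * v.2.1 * v.2.2 +
    2 * q.e * v.1 * v.2.2 + 2 * q.f * v.1 * v.2.1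

/-- The upper left `2 × 2` minor of the Gram matrix. -/
def minor (q : TernaryForm) : ℤ := q.a * q.b - q.f ^ 2

/-- The determinant of the Gram matrix. -/
def disc (q : TernaryForm) : ℤ :=
  q.a * q.b * q.c + 2 * q.d * q.e * q.f - q.a * q.d ^ 2 - q.b * q.e ^ 2 - q.c * q.f ^ 2

/-- Positive definiteness over `ℤ`. -/
def PosDef (q : TernaryForm) : Prop := ∀ v, v ≠ 0 → 0 < q.eval v

/-- Equivalence over `GL₃(ℤ)`. Equality of the discriminants, which follows from the existence of
`φ`, is recorded to avoid determinants. -/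
def Equivalent (q r : TernaryForm) : Prop :=
  q.disc = r.disc ∧ ∃ φ : ℤ × ℤ × ℤ ≃+ ℤ × ℤ × ℤ, ∀ v, r.eval v = q.eval (φ v)

/-- The form obtained by exchanging the variables `x` and `y`. -/
def swapXY (q : TernaryForm) : TernaryForm := ⟨q.b, q.a, q.c, q.e, q.d, q.f⟩

/-- The form obtained by exchanging the variables `y` and `z`. -/
def swapYZ (q : TernaryForm) : TernaryForm := ⟨q.a, q.c, q.b, q.d, q.f, q.e⟩

/-- The form obtained by substituting `x + t y` for `x`. -/
def shear (q : TernaryForm) (t : ℤ) : TernaryForm :=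
  ⟨q.a, q.b + 2 * t * q.f + t ^ 2 * q.a, q.c, q.d + t * q.e, q.e, q.f + t * q.a⟩

/-- Minkowski-type reduction: the off-diagonal entries are at most half the diagonal ones, both for
`q` and for the binary form left after splitting off `x`, and neither swap makes the pair
`(a, minor)` smaller. -/
structure Reduced (q : TernaryForm) : Prop where
  two_abs_f_le : 2 * |q.f| ≤ q.a
  two_abs_e_le : 2 * |q.e| ≤ q.a
  two_abs_cross_le : 2 * |q.a * q.d - q.e * q.f| ≤ q.minor
  a_le_b : q.a ≤ q.b
  minor_le : q.minor ≤ q.a * q.c - q.e ^ 2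

variable {q r s : TernaryForm}

theorem minor_mul_sub_cross_sq (q : TernaryForm) :
    q.minor * (q.a * q.c - q.e ^ 2) - (q.a * q.d - q.e * q.f) ^ 2 = q.a * q.disc := by
  simp only [minor, disc]
  ring

theorem posDef_of_pos (ha : 0 < q.a) (hm : 0 < q.minor) (hD : 0 < q.disc) : q.PosDef := by
  rintro ⟨x, y, z⟩ hv
  have complete_square : q.a * q.minor * q.eval (x, y, z) =
      q.minor * (q.a * x + q.f * y + q.e * z) ^ 2 +
        (q.minor * y + (q.a * q.d - q.e * q.f) * z) ^ 2 + q.a * q.disc * z ^ 2 := by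
    simp only [minor, disc, eval]
    ring
  rw [← mul_pos_iff_of_pos_left (mul_pos ha hm), complete_square]
  rcases ne_or_eq z 0 with hz | rfl
  · positivity
  rcases ne_or_eq y 0 with hy | rfl
  · simp only [mul_zero, add_zero]
    positivity
  have hx : x ≠ 0 := by
    rintro rfl
    exact hv rfl
  simp only [mul_zero, add_zero]
  positivity

theorem PosDef.a_pos (h : q.PosDef) : 0 < q.a := by
  simpa [eval] using h (1, 0, 0) (by simp)

theorem PosDef.minor_pos (h : q.PosDef) : 0 < q.minor := by
  have hval : q.eval (-q.f, q.a, 0) = q.a * q.minor := by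
    simp only [eval, minor]
    ring
  have := h (-q.f, q.a, 0) (by simp [h.a_pos.ne'])
  exact pos_of_mul_pos_right (hval ▸ this) h.a_pos.le

theorem Equivalent.refl (q : TernaryForm) : q.Equivalent q :=
  ⟨rfl, AddEquiv.refl _, fun _ ↦ rfl⟩

theorem Equivalent.trans (h : q.Equivalent r) (h' : r.Equivalent s) : q.Equivalent s := by
  obtain ⟨hD, φ, hφ⟩ := h
  obtain ⟨hD', ψ, hψ⟩ := h'
  exact ⟨hD.trans hD', ψ.trans φ, fun v ↦ (hψ v).trans (hφ (ψ v))⟩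

theorem PosDef.of_equivalent (hq : q.PosDef) (h : q.Equivalent r) : r.PosDef := by
  obtain ⟨-, φ, hφ⟩ := h
  intro v hv
  rw [hφ]
  exact hq _ (φ.map_ne_zero_iff.mpr hv)

theorem Equivalent.exists_eval_eq (h : q.Equivalent r) (v : ℤ × ℤ × ℤ) :
    ∃ w, r.eval w = q.eval v := by
  obtain ⟨-, φ, hφ⟩ := h
  exact ⟨φ.symm v, by rw [hφ, φ.apply_symm_apply]⟩

theorem equivalent_swapXY (q : TernaryForm) : q.Equivalent q.swapXY := by
  let φ : ℤ × ℤ × ℤ ≃+ ℤ × ℤ × ℤ :=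
    { toFun := fun v ↦ (v.2.1, v.1, v.2.2)
      invFun := fun v ↦ (v.2.1, v.1, v.2.2)
      left_inv := fun _ ↦ rfl
      right_inv := fun _ ↦ rfl
      map_add' := fun _ _ ↦ rfl }
  refine ⟨by simp only [disc, swapXY]; ring, φ, fun v ↦ ?_⟩
  change q.swapXY.eval v = q.eval (v.2.1, v.1, v.2.2)
  simp only [eval, swapXY]
  ring

theorem equivalent_swapYZ (q : TernaryForm) : q.Equivalent q.swapYZ := by
  let φ : ℤ × ℤ × ℤ ≃+ ℤ × ℤ × ℤ :=
    { toFun := fun v ↦ (v.1, v.2.2, v.2.1)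
      invFun := fun v ↦ (v.1, v.2.2, v.2.1)
      left_inv := fun _ ↦ rfl
      right_inv := fun _ ↦ rfl
      map_add' := fun _ _ ↦ rfl }
  refine ⟨by simp only [disc, swapYZ]; ring, φ, fun v ↦ ?_⟩
  change q.swapYZ.eval v = q.eval (v.1, v.2.2, v.2.1)
  simp only [eval, swapYZ]
  ring

theorem equivalent_shear (q : TernaryForm) (t : ℤ) : q.Equivalent (q.shear t) := by
  let φ : ℤ × ℤ × ℤ ≃+ ℤ × ℤ × ℤ :=
    { toFun := fun v ↦ (v.1 + t * v.2.1, v.2.1, v.2.2)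
      invFun := fun v ↦ (v.1 - t * v.2.1, v.2.1, v.2.2)
      left_inv := fun v ↦ by simp
      right_inv := fun v ↦ by simp
      map_add' := fun v w ↦ Prod.ext (by simp only [Prod.fst_add, Prod.snd_add]; ring) rfl }
  refine ⟨by simp only [disc, shear]; ring, φ, fun v ↦ ?_⟩
  change (q.shear t).eval v = q.eval (v.1 + t * v.2.1, v.2.1, v.2.2)
  simp only [eval, shear]
  ring

/-- Composite of elementary moves fixing `a` and `minor`: it substitutes `y + t z` for `y`, then
`x + s z` and `x + r y` for `x`. -/
def shearAll (q : TernaryForm) (t s r : ℤ) : TernaryForm :=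
  ((((q.swapXY.swapYZ.shear t).swapYZ.swapXY).swapYZ.shear s).swapYZ).shear r

theorem equivalent_shearAll (q : TernaryForm) (t s r : ℤ) : q.Equivalent (q.shearAll t s r) :=
  (equivalent_swapXY _).trans <| (equivalent_swapYZ _).trans <| (equivalent_shear _ t).trans <|
    (equivalent_swapYZ _).trans <| (equivalent_swapXY _).trans <| (equivalent_swapYZ _).trans <|
    (equivalent_shear _ s).trans <| (equivalent_swapYZ _).trans <| equivalent_shear _ r

theorem exists_equivalent_lex_minimal (hq : q.PosDef) :
    ∃ r, q.Equivalent r ∧ ∀ s, r.Equivalent s → r.a ≤ s.a ∧ (s.a = r.a → r.minor ≤ s.minor) := by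
  let size (r : TernaryForm) : ℕ ×ₗ ℕ := toLex (r.a.toNat, r.minor.toNat)
  obtain ⟨r, hqr, hmin⟩ :=
    exists_minimalFor_of_wellFoundedLT (q.Equivalent ·) size ⟨q, Equivalent.refl q⟩
  refine ⟨r, hqr, fun s hrs ↦ ?_⟩
  have hr := hq.of_equivalent hqr
  have hs := hr.of_equivalent hrs
  have hle : size r ≤ size s :=
    (le_total (size r) (size s)).elim id fun h ↦ hmin (hqr.trans hrs) h
  have := hr.a_pos
  have := hs.a_pos
  have := hr.minor_pos
  have := hs.minor_pos
  rw [Prod.Lex.le_iff] at hle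
  simp only [size, ofLex_toLex] at hle
  omega

theorem exists_reduced_equivalent (hq : q.PosDef) : ∃ r, q.Equivalent r ∧ r.Reduced := by
  obtain ⟨m, hqm, hmin⟩ := exists_equivalent_lex_minimal hq
  have hm := hq.of_equivalent hqm
  obtain ⟨t, ht⟩ := exists_two_mul_abs_add_mul_le hm.minor_pos (m.a * m.d - m.e * m.f)
  obtain ⟨s, hs⟩ := exists_two_mul_abs_add_mul_le hm.a_pos (m.e + t * m.f)
  obtain ⟨r, hr⟩ := exists_two_mul_abs_add_mul_le hm.a_pos m.f
  have hshear := equivalent_shearAll m t s r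
  have hminor : (m.shearAll t s r).minor = m.minor := by
    simp only [minor, shearAll, shear, swapXY, swapYZ]
    ring
  have hcross : (m.shearAll t s r).a * (m.shearAll t s r).d -
      (m.shearAll t s r).e * (m.shearAll t s r).f = m.a * m.d - m.e * m.f + t * m.minor := by
    simp only [minor, shearAll, shear, swapXY, swapYZ]
    ring
  exact ⟨m.shearAll t s r, hqm.trans hshear,
    { two_abs_f_le := hr
      two_abs_e_le := hs
      two_abs_cross_le := by rwa [hcross, hminor]
      a_le_b := (hmin _ (hshear.trans (equivalent_swapXY _))).1
      minor_le := hminor ▸ (hmin _ (hshear.trans (equivalent_swapYZ _))).2 rfl }⟩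

theorem Reduced.three_mul_a_sq_le (h : q.Reduced) : 3 * q.a ^ 2 ≤ 4 * q.minor := by
  have hf : (2 * q.f) ^ 2 ≤ q.a ^ 2 := by
    refine sq_le_sq.mpr ?_
    simpa [abs_mul] using h.two_abs_f_le.trans (le_abs_self _)
  have ha : 0 ≤ q.a := (by positivity : 0 ≤ 2 * |q.f|).trans h.two_abs_f_le
  have := mul_le_mul_of_nonneg_left h.a_le_b ha
  simp only [minor]
  linarith

theorem Reduced.three_mul_minor_sq_le (h : q.Reduced) : 3 * q.minor ^ 2 ≤ 4 * q.a * q.disc := by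
  have hcross : (2 * (q.a * q.d - q.e * q.f)) ^ 2 ≤ q.minor ^ 2 := by
    refine sq_le_sq.mpr ?_
    simpa [abs_mul] using h.two_abs_cross_le.trans (le_abs_self _)
  have hminor : 0 ≤ q.minor :=
    (by positivity : 0 ≤ 2 * |q.a * q.d - q.e * q.f|).trans h.two_abs_cross_le
  have := mul_le_mul_of_nonneg_left h.minor_le hminor
  linarith [q.minor_mul_sub_cross_sq]

theorem Reduced.a_cube_le (h : q.Reduced) (ha : 0 < q.a) : 27 * q.a ^ 3 ≤ 64 * q.disc := by
  refine le_of_mul_le_mul_left ?_ ha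
  calc q.a * (27 * q.a ^ 3) = 3 * (3 * q.a ^ 2) ^ 2 := by ring
    _ ≤ 3 * (4 * q.minor) ^ 2 :=
      mul_le_mul_of_nonneg_left (pow_le_pow_left₀ (by positivity) h.three_mul_a_sq_le 2) (by simp)
    _ ≤ q.a * (64 * q.disc) := by linarith [h.three_mul_minor_sq_le]

/-- Modulo `m`, the form `q` vanishes only on the radical of its polar form; equivalently, `q`
induces an anisotropic form on the quotient by that radical. -/
def AnisotropicMod (q : TernaryForm) (m : ℤ) : Prop :=
  ∀ v w, m ∣ q.eval v → m ∣ q.eval (v + w) - q.eval w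

theorem AnisotropicMod.of_equivalent {m : ℤ} (hq : q.AnisotropicMod m) (h : q.Equivalent r) :
    r.AnisotropicMod m := by
  obtain ⟨-, φ, hφ⟩ := h
  intro v w hv
  rw [hφ] at hv
  rw [hφ, hφ, map_add]
  exact hq _ _ hv

theorem Reduced.eq_of_disc_eq_one (h : q.Reduced) (hpos : q.PosDef) (hD : q.disc = 1) :
    q = ⟨1, 1, 1, 0, 0, 0⟩ := by
  have hcube := h.a_cube_le hpos.a_pos
  have hsq := h.three_mul_minor_sq_le
  have ha := hpos.a_pos
  have hm := hpos.minor_pos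
  obtain ⟨a, b, c, d, e, f⟩ := q
  obtain ⟨hf, he, hcross, hab, -⟩ := h
  simp only [minor, disc] at *
  obtain rfl : a = 1 := by
    by_contra hne
    nlinarith [mul_nonneg (by lia : 0 ≤ a - 2) (sq_nonneg a)]
  obtain rfl : f = 0 := Int.abs_lt_one_iff.mp (by lia)
  obtain rfl : e = 0 := Int.abs_lt_one_iff.mp (by lia)
  obtain rfl : b = 1 := by nlinarith
  obtain rfl : d = 0 := Int.abs_lt_one_iff.mp (by simp at hcross; lia)
  obtain rfl : c = 1 := by linarith
  rfl

theorem Reduced.eq_of_disc_eq_ten_of_a_eq_one (h : q.Reduced) (hpos : q.PosDef) (hD : q.disc = 10)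
    (h5 : q.AnisotropicMod 5) (ha : q.a = 1) : q = ⟨1, 2, 5, 0, 0, 0⟩ := by
  have hsq := h.three_mul_minor_sq_le
  have hm := hpos.minor_pos
  have hiso := h5 (1, 2, 0) (1, 0, 0)
  obtain ⟨a, b, c, d, e, f⟩ := q
  obtain ⟨hf, he, hcross, -, -⟩ := h
  simp only [minor, disc, eval, Prod.mk_add_mk] at *
  subst ha
  obtain rfl : f = 0 := Int.abs_lt_one_iff.mp (by lia)
  obtain rfl : e = 0 := Int.abs_lt_one_iff.mp (by lia)
  simp only [mul_zero, sub_zero, one_mul] at hcross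
  have hb : b ≤ 3 := by nlinarith
  have hd := abs_le.mp (show |d| ≤ 1 by lia)
  obtain ⟨hd₁, hd₂⟩ := hd
  have hb₀ : 0 < b := by lia
  interval_cases b <;> interval_cases d <;> norm_num at * <;> lia

theorem Reduced.a_ne_two_of_disc_eq_ten (h : q.Reduced) (hpos : q.PosDef) (hD : q.disc = 10)
    (h5 : q.AnisotropicMod 5) (hodd : ∃ v, ¬ 2 ∣ q.eval v) : q.a ≠ 2 := by
  have hsq := h.three_mul_minor_sq_le
  have hm := hpos.minor_pos
  have hiso := h5 (1, 2, 0) (1, 0, 0)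
  obtain ⟨⟨x, y, z⟩, hv⟩ := hodd
  obtain ⟨a, b, c, d, e, f⟩ := q
  obtain ⟨hf, he, hcross, hab, hswap⟩ := h
  simp only [minor, disc, eval, Prod.mk_add_mk] at *
  rintro rfl
  have hbc : ¬ (2 ∣ b ∧ 2 ∣ c) := by
    rintro ⟨⟨b', rfl⟩, c', rfl⟩
    exact hv ⟨x ^ 2 + b' * y ^ 2 + c' * z ^ 2 + d * y * z + e * x * z + f * x * y, by ring⟩
  obtain ⟨hf₁, hf₂⟩ := abs_le.mp (show |f| ≤ 1 by lia)
  obtain ⟨he₁, he₂⟩ := abs_le.mp (show |e| ≤ 1 by lia)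
  have hm5 : 2 * b - f ^ 2 ≤ 5 := by nlinarith
  obtain ⟨hd₁, hd₂⟩ := abs_le.mp (show |2 * d - e * f| ≤ 2 by lia)
  have hd₃ : -1 ≤ d := by nlinarith
  have hd₄ : d ≤ 1 := by nlinarith
  have hb₁ : b ≤ 3 := by nlinarith
  interval_cases f <;> interval_cases e <;> interval_cases b <;> interval_cases d <;> omega

theorem Reduced.eq_of_disc_eq_ten (h : q.Reduced) (hpos : q.PosDef) (hD : q.disc = 10)
    (h5 : q.AnisotropicMod 5) (hodd : ∃ v, ¬ 2 ∣ q.eval v) : q = ⟨1, 2, 5, 0, 0, 0⟩ := by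
  have ha := hpos.a_pos
  have ha2 : q.a ≤ 2 := by
    by_contra hlt
    nlinarith [h.a_cube_le ha, mul_nonneg (by lia : 0 ≤ q.a - 3) (sq_nonneg q.a)]
  have := h.a_ne_two_of_disc_eq_ten hpos hD h5 hodd
  exact h.eq_of_disc_eq_ten_of_a_eq_one hpos hD h5 (by lia)

theorem PosDef.exists_sum_three_sq (hq : q.PosDef) (hD : q.disc = 1) (v : ℤ × ℤ × ℤ) :
    ∃ x y z : ℤ, x ^ 2 + y ^ 2 + z ^ 2 = q.eval v := by
  obtain ⟨r, hqr, hr⟩ := exists_reduced_equivalent hq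
  obtain ⟨⟨x, y, z⟩, hw⟩ := hqr.exists_eval_eq v
  rw [hr.eq_of_disc_eq_one (hq.of_equivalent hqr) (hqr.1 ▸ hD)] at hw
  exact ⟨x, y, z, by rw [← hw]; simp [eval]⟩

theorem PosDef.exists_sq_add_two_sq_add_five_sq (hq : q.PosDef) (hD : q.disc = 10)
    (h5 : q.AnisotropicMod 5) {v : ℤ × ℤ × ℤ} (hv : ¬ 2 ∣ q.eval v) :
    ∃ x y z : ℤ, x ^ 2 + 2 * y ^ 2 + 5 * z ^ 2 = q.eval v := by
  obtain ⟨r, hqr, hr⟩ := exists_reduced_equivalent hq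
  obtain ⟨⟨x, y, z⟩, hw⟩ := hqr.exists_eval_eq v
  rw [hr.eq_of_disc_eq_ten (hq.of_equivalent hqr) (hqr.1 ▸ hD) (h5.of_equivalent hqr)
    ⟨_, hw ▸ hv⟩] at hw
  exact ⟨x, y, z, by rw [← hw]; simp [eval]⟩

end TernaryForm

/-! ### Sums of three squares -/

open scoped NumberTheorySymbols

section Jacobi

variable {p k : ℕ}

theorem exists_prime_mod_eight_dvd_mul_add (hk : Odd k) {a c e : ℕ} (ha : Odd a)
    (hc : c.Coprime k) (he : e.Coprime k) :
    ∃ p > 5, p.Prime ∧ p % 8 = a % 8 ∧ k ∣ c * p + e := by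
  have hk8 : Nat.Coprime 8 k := (Nat.coprime_two_left.mpr hk).pow_left 3
  have : NeZero (8 * k) := ⟨by have := hk.pos; lia⟩
  let crt := ZMod.chineseRemainder hk8
  have hunit : IsUnit (crt.symm ((a : ZMod 8), -e * (c : ZMod k)⁻¹)) := by
    refine .map crt.symm (Prod.isUnit_iff.mpr ⟨?_, ?_⟩)
    · exact (ZMod.isUnit_iff_coprime a 8).mpr ((Nat.coprime_two_right.mpr ha).pow_right 3)
    · exact ((ZMod.isUnit_iff_coprime e k).mpr he).neg.mul
        (.of_mul_eq_one _ ((mul_comm _ _).trans (ZMod.coe_mul_inv_eq_one c hc)))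
  obtain ⟨p, hp5, hp, hmod⟩ := Nat.forall_exists_prime_gt_and_eq_mod hunit 5
  have hcrt : ((p : ZMod 8), (p : ZMod k)) = ((a : ZMod 8), -e * (c : ZMod k)⁻¹) := by
    rw [← crt.apply_symm_apply ((a : ZMod 8), -e * (c : ZMod k)⁻¹), ← hmod, map_natCast]
    rfl
  obtain ⟨hp8, hpk⟩ := Prod.mk.inj hcrt
  refine ⟨p, hp5, hp, (ZMod.natCast_eq_natCast_iff' p a 8).mp hp8, ?_⟩
  rw [← ZMod.natCast_eq_zero_iff]
  push_cast
  rw [hpk, mul_left_comm, ZMod.coe_mul_inv_eq_one c hc]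
  ring

theorem exists_dvd_sq_add_of_jacobiSym_eq_one (hp : p.Prime) {m s δ : ℤ} (hm : J(m | p) = 1)
    (hs : s.gcd p = 1) (h : (p : ℤ) ∣ m * δ + s ^ 2) : ∃ b : ℤ, (p : ℤ) ∣ b ^ 2 + δ := by
  have := Fact.mk hp
  have hδ : J(-δ | p) = 1 := by
    have hmod : J(m * -δ | p) = J(s ^ 2 | p) :=
      jacobiSym.mod_left' (Int.modEq_iff_dvd.mpr (by rwa [mul_neg, sub_neg_eq_add, add_comm]))
    rwa [jacobiSym.mul_left, hm, one_mul, jacobiSym.sq_one' hs] at hmod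
  obtain ⟨r, hr⟩ := ZMod.isSquare_of_jacobiSym_eq_one hδ
  refine ⟨r.val, ?_⟩
  rw [← ZMod.intCast_zmod_eq_zero_iff_dvd]
  push_cast at hr ⊢
  rw [ZMod.natCast_zmod_val, pow_two, ← hr, neg_add_cancel]

theorem jacobiSym_mul_jacobiSym_of_dvd {c e : ℕ} (h : k ∣ c * p + e) :
    J(c | k) * J(p | k) = J(-e | k) := by
  rw [← jacobiSym.mul_left]
  refine jacobiSym.mod_left' (Int.ModEq.symm (Int.modEq_iff_dvd.mpr ?_))
  rw [sub_neg_eq_add]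
  exact_mod_cast h

theorem jacobiSym_neg_one_eq_one (hp : p % 4 = 1) : J(-1 | p) = 1 := by
  rw [jacobiSym.at_neg_one (Nat.odd_iff.mpr (by lia)), ZMod.χ₄_nat_one_mod_four hp]

theorem jacobiSym_neg_one_eq_neg_one (hp : p % 4 = 3) : J(-1 | p) = -1 := by
  rw [jacobiSym.at_neg_one (Nat.odd_iff.mpr (by lia)), ZMod.χ₄_nat_three_mod_four hp]

theorem jacobiSym_neg_two_eq_one (hp : p % 8 = 1 ∨ p % 8 = 3) : J(-2 | p) = 1 := by
  rw [jacobiSym.at_neg_two (Nat.odd_iff.mpr (by lia)), ZMod.χ₈'_nat_eq_if_mod_eight,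
    if_neg (by lia), if_pos hp]

theorem jacobiSym_neg_two_eq_neg_one (hp : p % 8 = 5 ∨ p % 8 = 7) : J(-2 | p) = -1 := by
  rw [jacobiSym.at_neg_two (Nat.odd_iff.mpr (by lia)), ZMod.χ₈'_nat_eq_if_mod_eight,
    if_neg (by lia), if_neg (by lia)]

end Jacobi

theorem exists_sum_three_sq_of_dvd_sq_add {k δ a b : ℤ} (ha : 0 < a) (hδ : 0 < δ)
    (hk : a = k * δ - 1) (hb : a ∣ b ^ 2 + δ) : ∃ x y z : ℤ, x ^ 2 + y ^ 2 + z ^ 2 = k := by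
  obtain ⟨c, hc⟩ := hb
  let q : TernaryForm := ⟨a, c, k, 1, 0, b⟩
  have hminor : q.minor = δ := by
    simp only [TernaryForm.minor, q]
    linarith
  have hdisc : q.disc = 1 := by
    simp only [TernaryForm.disc, q]
    linear_combination -k * hc - hk
  have hpos : q.PosDef := TernaryForm.posDef_of_pos ha (hminor ▸ hδ) (hdisc ▸ one_pos)
  simpa [q, TernaryForm.eval] using hpos.exists_sum_three_sq hdisc (0, 0, 1)

theorem exists_sum_three_sq_two_mul {k : ℕ} (hk : Odd k) :
    ∃ x y z : ℤ, x ^ 2 + y ^ 2 + z ^ 2 = 2 * k := by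
  have hk2 : k % 2 = 1 := Nat.odd_iff.mp hk
  obtain ⟨p, hp5, hp, hp8, hdvd⟩ := exists_prime_mod_eight_dvd_mul_add hk
    (a := if k % 4 = 1 then 1 else 5) (by split_ifs <;> decide) k.coprime_one_left
    k.coprime_one_left
  have hpk : J(p | k) = J(-1 | k) := by simpa using jacobiSym_mul_jacobiSym_of_dvd hdvd
  have hJ : J(-2 * k | p) = 1 := by
    rw [jacobiSym.mul_left, jacobiSym.quadratic_reciprocity_one_mod_four' hk (by lia), hpk]
    split_ifs at hp8 with hk4
    · rw [jacobiSym_neg_two_eq_one (by lia), jacobiSym_neg_one_eq_one hk4, one_mul]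
    · rw [jacobiSym_neg_two_eq_neg_one (by lia), jacobiSym_neg_one_eq_neg_one (by lia)]
      rfl
  obtain ⟨δ, hδ⟩ : 2 * k ∣ p + 1 :=
    Nat.Coprime.mul_dvd_of_dvd_of_dvd (Nat.coprime_two_left.mpr hk)
      (by split_ifs at hp8 <;> lia) (by simpa using hdvd)
  have hδ' : (p : ℤ) + 1 = 2 * k * δ := by exact_mod_cast hδ
  obtain ⟨b, hb⟩ := exists_dvd_sq_add_of_jacobiSym_eq_one (δ := δ) hp hJ (Int.gcd_one_left _)
    ⟨-1, by linear_combination hδ'⟩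
  have hδ0 : 0 < δ := Nat.pos_of_ne_zero (by rintro rfl; simp at hδ)
  exact exists_sum_three_sq_of_dvd_sq_add (by lia) (by lia) (by linear_combination hδ') hb

theorem exists_two_mul_dvd_sq_add {p δ b : ℤ} (hp : Odd p) (hδ : Odd δ) (hb : p ∣ b ^ 2 + δ) :
    ∃ b' : ℤ, 2 * p ∣ b' ^ 2 + δ := by
  obtain ⟨b', hodd, hb'⟩ : ∃ b' : ℤ, Odd b' ∧ p ∣ b' ^ 2 + δ := by
    rcases b.even_or_odd with heven | hodd
    · refine ⟨b + p, heven.add_odd hp, ?_⟩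
      obtain ⟨u, hu⟩ := hb
      exact ⟨u + 2 * b + p, by linear_combination hu⟩
    · exact ⟨b, hodd, hb⟩
  exact ⟨b', (Int.isCoprime_two_left.mpr hp).mul_dvd (hodd.pow.add_odd hδ).two_dvd hb'⟩

theorem exists_sum_three_sq_odd {k : ℕ} (hk : k % 8 = 1 ∨ k % 8 = 3 ∨ k % 8 = 5) :
    ∃ x y z : ℤ, x ^ 2 + y ^ 2 + z ^ 2 = k := by
  have hodd : Odd k := Nat.odd_iff.mpr (by lia)
  obtain ⟨p, hp5, hp, hp8, hdvd⟩ := exists_prime_mod_eight_dvd_mul_add hodd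
    (a := if k % 8 = 5 then 3 else 1) (by split_ifs <;> decide) (Nat.coprime_two_left.mpr hodd)
    k.coprime_one_left
  have hpk : J(p | k) = J(-2 | k) := by
    have h2 : J(2 | k) ^ 2 = 1 := jacobiSym.sq_one (Nat.coprime_two_left.mpr hodd)
    have h := jacobiSym_mul_jacobiSym_of_dvd hdvd
    rw [show (-2 : ℤ) = -1 * 2 by rfl, jacobiSym.mul_left]
    push_cast at h
    linear_combination J(2 | k) * h - J(p | k) * h2
  have hp_odd : Odd p := hp.odd_of_ne_two (by lia)
  have hJ : J(-1 * k | p) = 1 := by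
    rw [jacobiSym.mul_left]
    split_ifs at hp8 with hk5
    · rw [jacobiSym_neg_one_eq_neg_one (by lia),
        jacobiSym.quadratic_reciprocity_one_mod_four (by lia) hp_odd, hpk,
        jacobiSym_neg_two_eq_neg_one (by lia)]
      rfl
    · rw [jacobiSym_neg_one_eq_one (by lia),
        jacobiSym.quadratic_reciprocity_one_mod_four' hodd (by lia), hpk,
        jacobiSym_neg_two_eq_one (by lia), one_mul]
  obtain ⟨δ, hδ⟩ := hdvd
  have hδ' : 2 * (p : ℤ) + 1 = k * δ := by exact_mod_cast hδ
  have hδ_odd : Odd δ := (Nat.odd_mul.mp (hδ ▸ odd_two_mul_add_one p)).2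
  obtain ⟨b, hb⟩ := exists_dvd_sq_add_of_jacobiSym_eq_one (δ := δ) hp hJ (Int.gcd_one_left _)
    ⟨-2, by linear_combination hδ'⟩
  obtain ⟨b', hb'⟩ := exists_two_mul_dvd_sq_add (by exact_mod_cast hp_odd)
    (by exact_mod_cast hδ_odd) hb
  exact exists_sum_three_sq_of_dvd_sq_add (by lia) (by have := hδ_odd.pos; lia)
    (by linear_combination hδ') hb'

theorem exists_sum_three_sq {k : ℤ} (hk₀ : 0 ≤ k)
    (hk : k % 8 = 1 ∨ k % 8 = 2 ∨ k % 8 = 3 ∨ k % 8 = 5 ∨ k % 8 = 6) :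
    ∃ x y z : ℤ, x ^ 2 + y ^ 2 + z ^ 2 = k := by
  lift k to ℕ using hk₀
  rcases k.even_or_odd' with ⟨j, rfl | rfl⟩
  · exact_mod_cast exists_sum_three_sq_two_mul (k := j) (Nat.odd_iff.mpr (by lia))
  · exact exists_sum_three_sq_odd (by lia)

/-! ### The form `x² + 5y² + 10z²` -/

theorem five_dvd_of_dvd_sq_add_mul_sq {δ x y : ℤ} (hδ : δ % 5 = 2 ∨ δ % 5 = 3)
    (h : 5 ∣ x ^ 2 + δ * y ^ 2) : 5 ∣ x ∧ 5 ∣ y := by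
  have anisotropic : ∀ δ x y : ZMod 5, δ = 2 ∨ δ = 3 → x ^ 2 + δ * y ^ 2 = 0 → x = 0 ∧ y = 0 := by
    decide
  have hδ' : (δ : ZMod 5) = 2 ∨ (δ : ZMod 5) = 3 :=
    hδ.imp (fun h ↦ (ZMod.intCast_eq_intCast_iff' δ 2 5).mpr h)
      (fun h ↦ (ZMod.intCast_eq_intCast_iff' δ 3 5).mpr h)
  rw [← Nat.cast_ofNat, ← ZMod.intCast_zmod_eq_zero_iff_dvd] at h
  rw [← Nat.cast_ofNat, ← ZMod.intCast_zmod_eq_zero_iff_dvd, ← ZMod.intCast_zmod_eq_zero_iff_dvd]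
  exact anisotropic _ _ _ hδ' (by exact_mod_cast h)

theorem anisotropicMod_five {p b c δ : ℤ} (k : ℤ) (hp : IsCoprime 5 p) (hδ : δ % 5 = 2 ∨ δ % 5 = 3)
    (hc : b ^ 2 + δ = p * c) : TernaryForm.AnisotropicMod ⟨p, c, 5 * k, 5, 0, b⟩ 5 := by
  rintro ⟨x, y, z⟩ ⟨x', y', z'⟩ ⟨u, hu⟩
  simp only [TernaryForm.eval] at hu
  have hnorm : 5 ∣ (p * x + b * y) ^ 2 + δ * y ^ 2 :=
    ⟨p * u - p * k * z ^ 2 - 2 * p * y * z, by linear_combination p * hu + y ^ 2 * hc⟩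
  obtain ⟨hxy, y, rfl⟩ := five_dvd_of_dvd_sq_add_mul_sq hδ hnorm
  obtain ⟨x, rfl⟩ : 5 ∣ x := hp.dvd_of_dvd_mul_left <|
    (Int.dvd_add_left (Dvd.intro_left (b * y) (by ring))).mp hxy
  simp only [TernaryForm.eval, Prod.mk_add_mk]
  exact ⟨p * (5 * x ^ 2 + 2 * x * x') + c * (5 * y ^ 2 + 2 * y * y') + k * (z ^ 2 + 2 * z * z') +
    2 * ((5 * y + y') * (z + z') - y' * z') + 2 * b * (5 * x * y + x * y' + y * x'), by ring⟩

theorem exists_prime_sq_add_eq_mul {k : ℕ} (hk : Odd k) (hk5 : k % 5 = 1 ∨ k % 5 = 4) :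
    ∃ p : ℕ, p.Prime ∧ 5 < p ∧ ∃ δ b c : ℤ, 5 * p + 2 = k * δ ∧ b ^ 2 + δ = p * c := by
  have hk2 := Nat.odd_iff.mp hk
  obtain ⟨p, hp5, hp, hp8, hdvd⟩ := exists_prime_mod_eight_dvd_mul_add hk
    (a := if k % 8 = 1 ∨ k % 8 = 3 then 1 else 5) (c := 5) (e := 2) (by split_ifs <;> decide)
    ((Nat.Prime.coprime_iff_not_dvd Nat.prime_five).mpr (by lia)) (Nat.coprime_two_left.mpr hk)
  have hJ5 : J((5 : ℕ) | k) = 1 := by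
    rw [jacobiSym.quadratic_reciprocity_one_mod_four rfl hk, jacobiSym.mod_left]
    rcases hk5 with h | h
    · rw [show (k : ℤ) % (5 : ℕ) = 1 by lia, jacobiSym.one_left]
    · rw [show (k : ℤ) % (5 : ℕ) = 2 ^ 2 by lia, jacobiSym.sq_one' rfl]
  have hpk : J(p | k) = J(-2 | k) := by
    rw [← one_mul J(p | k), ← hJ5]
    exact jacobiSym_mul_jacobiSym_of_dvd hdvd
  have hJ : J(-2 * k | p) = 1 := by
    rw [jacobiSym.mul_left,
      jacobiSym.quadratic_reciprocity_one_mod_four' hk (by split_ifs at hp8 <;> lia), hpk]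
    split_ifs at hp8 with hk8
    · rw [jacobiSym_neg_two_eq_one (by lia), jacobiSym_neg_two_eq_one hk8, one_mul]
    · rw [jacobiSym_neg_two_eq_neg_one (by lia), jacobiSym_neg_two_eq_neg_one (by lia)]
      rfl
  obtain ⟨δ, hδ⟩ := hdvd
  have hδ' : 5 * (p : ℤ) + 2 = k * δ := by exact_mod_cast hδ
  obtain ⟨b, c, hc⟩ := exists_dvd_sq_add_of_jacobiSym_eq_one (s := 2) (δ := δ) hp hJ
    (Nat.coprime_two_left.mpr (hp.odd_of_ne_two (by lia)))
    ⟨-10, by linear_combination 2 * hδ'⟩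
  exact ⟨p, hp, hp5, δ, b, c, hδ', hc⟩

theorem exists_five_mul_eq_sq_add_two_sq_add_five_sq {k : ℕ} (hk : Odd k)
    (hk5 : k % 5 = 1 ∨ k % 5 = 4) : ∃ x y z : ℤ, x ^ 2 + 2 * y ^ 2 + 5 * z ^ 2 = 5 * k := by
  obtain ⟨p, hp, hp5, δ, b, c, hδ, hc⟩ := exists_prime_sq_add_eq_mul hk hk5
  let q : TernaryForm := ⟨p, c, 5 * k, 5, 0, b⟩
  have hδ0 : 0 < δ := by
    by_contra hneg
    have := mul_nonpos_of_nonneg_of_nonpos (Nat.cast_nonneg k) (not_lt.mp hneg)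
    lia
  have hδ5 : δ % 5 = 2 ∨ δ % 5 = 3 := by
    have hkδ : (k % 5 : ℤ) * (δ % 5) % 5 = 2 := by
      rw [← Int.mul_emod, ← hδ]
      lia
    have hk5' : (k : ℤ) % 5 = 1 ∨ (k : ℤ) % 5 = 4 := by lia
    rcases hk5' with h | h <;> rw [h] at hkδ <;> lia
  have hcop : IsCoprime (5 : ℤ) p :=
    Nat.isCoprime_iff_coprime.mpr ((Nat.coprime_primes Nat.prime_five hp).mpr (by lia))
  have hminor : q.minor = δ := by
    simp only [TernaryForm.minor, q]
    linarith
  have hdisc : q.disc = 10 := by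
    simp only [TernaryForm.disc, q]
    linear_combination -5 * k * hc - 5 * hδ
  have hpos : q.PosDef :=
    TernaryForm.posDef_of_pos (by simpa [q] using hp.pos) (hminor ▸ hδ0) (by rw [hdisc]; simp)
  have heval : q.eval (0, 0, 1) = 5 * k := by simp [q, TernaryForm.eval]
  have hval_odd : ¬ 2 ∣ q.eval (0, 0, 1) := by
    have := Nat.odd_iff.mp hk
    rw [heval]
    lia
  exact heval ▸ hpos.exists_sq_add_two_sq_add_five_sq hdisc (anisotropicMod_five k hcop hδ5 hc)
    hval_odd

theorem exists_sq_add_five_sq_add_ten_sq {k : ℤ} (hk₀ : 0 ≤ k) (hk : k % 2 = 1)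
    (hk5 : k % 5 = 1 ∨ k % 5 = 4) : ∃ x y z : ℤ, x ^ 2 + 5 * y ^ 2 + 10 * z ^ 2 = k := by
  lift k to ℕ using hk₀
  obtain ⟨y, z, x, hxyz⟩ :=
    exists_five_mul_eq_sq_add_two_sq_add_five_sq (Nat.odd_iff.mpr (by lia)) (by lia : k % 5 = 1 ∨ _)
  obtain ⟨⟨y, rfl⟩, z, rfl⟩ := five_dvd_of_dvd_sq_add_mul_sq (δ := 2) (.inl rfl)
    (⟨k - x ^ 2, by linarith⟩ : 5 ∣ y ^ 2 + 2 * z ^ 2)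
  exact ⟨x, y, z, by linarith⟩

/-! ### Residues of squares and the form `x² + y² + 5z²` -/

theorem sq_emod_three (x : ℤ) : (3 ∣ x ∧ x ^ 2 % 3 = 0) ∨ (¬ 3 ∣ x ∧ x ^ 2 % 3 = 1) := by
  have hx : x % 3 = 0 ∨ x % 3 = 1 ∨ x % 3 = 2 := by lia
  rcases hx with h | h | h <;> simp [Int.dvd_iff_emod_eq_zero, h, pow_two, Int.mul_emod]

theorem sq_emod_five (x : ℤ) : (x % 5 = 0 ∧ x ^ 2 % 5 = 0) ∨
    ((x % 5 = 1 ∨ x % 5 = 4) ∧ x ^ 2 % 5 = 1) ∨ ((x % 5 = 2 ∨ x % 5 = 3) ∧ x ^ 2 % 5 = 4) := by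
  have hx : x % 5 = 0 ∨ x % 5 = 1 ∨ x % 5 = 2 ∨ x % 5 = 3 ∨ x % 5 = 4 := by lia
  rcases hx with h | h | h | h | h <;> simp [h, pow_two, Int.mul_emod]

theorem sq_emod_sixteen (x : ℤ) : (x % 4 = 0 ∧ x ^ 2 % 16 = 0) ∨ (x % 4 = 2 ∧ x ^ 2 % 16 = 4) ∨
    (x % 2 = 1 ∧ x ^ 2 % 8 = 1) := by
  obtain ⟨q, r, rfl, hr⟩ : ∃ q r : ℤ, x = 4 * q + r ∧ (r = 0 ∨ r = 1 ∨ r = 2 ∨ r = 3) :=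
    ⟨x / 4, x % 4, by lia, by lia⟩
  rcases hr with rfl | rfl | rfl | rfl <;> ring_nf <;> lia

theorem exists_sq_eq_and_three_dvd_sub {x y : ℤ} (h : 3 ∣ x ↔ 3 ∣ y) :
    ∃ x', x' ^ 2 = x ^ 2 ∧ x' % 2 = x % 2 ∧ 3 ∣ x' - y := by
  rcases (by lia : 3 ∣ x - y ∨ 3 ∣ -x - y) with hxy | hxy
  · exact ⟨x, rfl, rfl, hxy⟩
  · exact ⟨-x, by ring, by lia, hxy⟩

theorem exists_sq_add_sq_add_five_sq_of_sum_three_sq {k a b c : ℤ}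
    (h : a ^ 2 + b ^ 2 + c ^ 2 = 5 * k) (hc : c % 5 = 0) :
    ∃ x y z : ℤ, x ^ 2 + y ^ 2 + 5 * z ^ 2 = k := by
  wlog hab : (a + 2 * b) % 5 = 0 generalizing a
  · refine this (a := -a) (by linarith) ?_
    have := sq_emod_five a
    have := sq_emod_five b
    have := sq_emod_five c
    lia
  obtain ⟨x, rfl⟩ : ∃ x, a = 5 * x - 2 * b := ⟨(a + 2 * b) / 5, by lia⟩
  obtain ⟨z, rfl⟩ : ∃ z, c = 5 * z := ⟨c / 5, by lia⟩
  exact ⟨x, 2 * x - b, z, by linarith⟩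

theorem exists_sq_add_sq_add_five_sq {k : ℤ} (hk₀ : 0 ≤ k) (hk4 : k % 4 ≠ 0) (hk8 : k % 8 ≠ 3) :
    ∃ x y z : ℤ, x ^ 2 + y ^ 2 + 5 * z ^ 2 = k := by
  obtain ⟨a, b, c, h⟩ := exists_sum_three_sq (k := 5 * k) (by lia) (by lia)
  have hzero : c % 5 = 0 ∨ b % 5 = 0 ∨ a % 5 = 0 := by
    have := sq_emod_five a
    have := sq_emod_five b
    have := sq_emod_five c
    lia
  rcases hzero with hc | hb | ha
  · exact exists_sq_add_sq_add_five_sq_of_sum_three_sq h hc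
  · exact exists_sq_add_sq_add_five_sq_of_sum_three_sq (a := a) (b := c) (by linarith) hb
  · exact exists_sq_add_sq_add_five_sq_of_sum_three_sq (a := b) (b := c) (by linarith) ha

/-- The generalized octagonal number `P₈(x)`. -/
def octagonal (x : ℤ) : ℤ := 3 * x ^ 2 - 2 * x

theorem octagonal_nonneg (x : ℤ) : 0 ≤ octagonal x := by
  unfold octagonal
  rcases le_or_gt x 0 with h | h <;> nlinarith

theorem three_mul_octagonal_add_one (x : ℤ) : 3 * octagonal x + 1 = (3 * x - 1) ^ 2 := by
  unfold octagonal
  ring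

theorem exists_three_mul_octagonal_add_one {u : ℤ} (hu : ¬ 3 ∣ u) :
    ∃ x, 3 * octagonal x + 1 = u ^ 2 := by
  rcases (by lia : u % 3 = 2 ∨ u % 3 = 1) with h | h
  · obtain ⟨x, rfl⟩ : ∃ x, u = 3 * x - 1 := ⟨(u + 1) / 3, by lia⟩
    exact ⟨x, three_mul_octagonal_add_one x⟩
  · obtain ⟨x, rfl⟩ : ∃ x, u = -(3 * x - 1) := ⟨(1 - u) / 3, by lia⟩
    exact ⟨x, by rw [three_mul_octagonal_add_one, neg_sq]⟩

/-- `N` is a value of `x² + 5y² + αz² + 2P₈(t)`. -/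
def IsThreeSqOneOctagonal (α N : ℤ) : Prop :=
  ∃ x y z t : ℤ, x ^ 2 + 5 * y ^ 2 + α * z ^ 2 + 2 * octagonal t = N

/-- `N` is a value of `x² + 5y² + 2P₈(z) + βP₈(t)`. -/
def IsTwoSqTwoOctagonal (β N : ℤ) : Prop :=
  ∃ x y z t : ℤ, x ^ 2 + 5 * y ^ 2 + 2 * octagonal z + β * octagonal t = N

/-! ### Values of the ternary sum `x² + 5y² + 2P₈(z)` -/

/-- A condition modulo `256` that makes `n` a value of `x² + 5y² + 2P₈(z)`: `n` is even, and
`(3n + 2) / 2` is not of the form `4ⁱ(8m + 3)` with `i ≤ 2`, nor divisible by `64`. -/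
def IsAdmissible (n : ℤ) : Prop :=
  n % 2 = 0 ∧ (3 * n + 2) % 16 ≠ 6 ∧ (3 * n + 2) % 64 ≠ 24 ∧ (3 * n + 2) % 256 ≠ 96 ∧
    (3 * n + 2) % 128 ≠ 0

instance : DecidablePred IsAdmissible := fun n ↦ by
  unfold IsAdmissible
  infer_instance

theorem IsAdmissible.of_emod_eq {m n : ℤ} (hm : IsAdmissible m) (h : m % 256 = n % 256) :
    IsAdmissible n := by
  unfold IsAdmissible at *
  lia

theorem exists_sq_add_sq_add_five_sq_of_four_mul {k : ℤ}
    (h : ∃ x y z : ℤ, x ^ 2 + y ^ 2 + 5 * z ^ 2 = k) :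
    ∃ x y z : ℤ, x ^ 2 + y ^ 2 + 5 * z ^ 2 = 4 * k := by
  obtain ⟨x, y, z, rfl⟩ := h
  exact ⟨2 * x, 2 * y, 2 * z, by ring⟩

theorem IsAdmissible.exists_sq_add_sq_add_five_sq {n : ℤ} (hn : IsAdmissible n) (hn₀ : 0 ≤ n) :
    ∃ k, 2 * k = 3 * n + 2 ∧ ∃ x y z : ℤ, x ^ 2 + y ^ 2 + 5 * z ^ 2 = k := by
  obtain ⟨k, hk⟩ : ∃ k, n = 2 * k := ⟨n / 2, by have := hn.1; lia⟩
  unfold IsAdmissible at hn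
  refine ⟨3 * k + 1, by lia, ?_⟩
  by_cases h4 : (3 * k + 1) % 4 = 0
  · rw [show 3 * k + 1 = 4 * ((3 * k + 1) / 4) by lia]
    refine exists_sq_add_sq_add_five_sq_of_four_mul ?_
    by_cases h16 : (3 * k + 1) % 16 = 0
    · rw [show (3 * k + 1) / 4 = 4 * ((3 * k + 1) / 16) by lia]
      exact exists_sq_add_sq_add_five_sq_of_four_mul
        (_root_.exists_sq_add_sq_add_five_sq (by lia) (by lia) (by lia))
    · exact _root_.exists_sq_add_sq_add_five_sq (by lia) (by lia) (by lia)
  · exact _root_.exists_sq_add_sq_add_five_sq (by lia) h4 (by lia)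

theorem exists_sq_add_five_sq_add_two_octagonal {n w Y S : ℤ}
    (h : 2 * (w ^ 2 + Y ^ 2 + 5 * S ^ 2) = 3 * n + 2) :
    ∃ x y z : ℤ, x ^ 2 + 5 * y ^ 2 + 2 * octagonal z = n := by
  have := sq_emod_three w
  have := sq_emod_three Y
  have := sq_emod_three S
  wlog hw : ¬ 3 ∣ w ∧ (3 ∣ Y ↔ 3 ∣ S) generalizing w Y
  · exact this (w := Y) (Y := w) (by linarith) ‹_› ‹_› (by lia)
  obtain ⟨Y', hY', -, hYS⟩ := exists_sq_eq_and_three_dvd_sub hw.2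
  obtain ⟨z, hz⟩ := exists_three_mul_octagonal_add_one hw.1
  obtain ⟨y, rfl⟩ : ∃ y, Y' = S + 3 * y := ⟨(Y' - S) / 3, by lia⟩
  exact ⟨y + 2 * S, y, z, by linarith⟩

theorem IsAdmissible.exists_sq_add_five_sq_add_two_octagonal {n : ℤ} (hn : IsAdmissible n)
    (hn₀ : 0 ≤ n) : ∃ x y z : ℤ, x ^ 2 + 5 * y ^ 2 + 2 * octagonal z = n := by
  obtain ⟨k, hk, w, Y, S, rfl⟩ := hn.exists_sq_add_sq_add_five_sq hn₀
  exact _root_.exists_sq_add_five_sq_add_two_octagonal hk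

theorem isThreeSqOneOctagonal_of_isAdmissible {α N z : ℤ} (h : IsAdmissible (N - α * z ^ 2))
    (h₀ : α * z ^ 2 ≤ N) : IsThreeSqOneOctagonal α N := by
  obtain ⟨x, y, t, hxyt⟩ := h.exists_sq_add_five_sq_add_two_octagonal (by linarith)
  exact ⟨x, y, z, t, by linarith⟩

theorem isTwoSqTwoOctagonal_of_isAdmissible {β N t : ℤ} (h : IsAdmissible (N - β * octagonal t))
    (h₀ : β * octagonal t ≤ N) : IsTwoSqTwoOctagonal β N := by
  obtain ⟨x, y, z, hxyz⟩ := h.exists_sq_add_five_sq_add_two_octagonal (by linarith)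
  exact ⟨x, y, z, t, by linarith⟩

/-! ### Small values -/

/-- Finite sets of natural numbers are encoded by the bits of a number; `sumsetMask A l` is the
mask of the sumset of `A` and the members of `l`. -/
def sumsetMask (A : ℕ) (l : List ℕ) : ℕ := l.foldr (fun v mask ↦ A <<< v ||| mask) 0

theorem exists_of_testBit_sumsetMask {A n : ℕ} {l : List ℕ} (h : (sumsetMask A l).testBit n) :
    ∃ m, A.testBit m ∧ ∃ v ∈ l, m + v = n := by
  induction l with
  | nil => simp [sumsetMask] at h
  | cons v l ih =>
    simp only [sumsetMask, List.foldr_cons, Nat.testBit_or, Nat.testBit_shiftLeft, Bool.or_eq_true,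
      Bool.and_eq_true, decide_eq_true_eq] at h
    rcases h with ⟨hv, hA⟩ | h
    · exact ⟨n - v, hA, v, List.mem_cons_self, by lia⟩
    · obtain ⟨m, hm, w, hw, hmw⟩ := ih h
      exact ⟨m, hm, w, List.mem_cons_of_mem v hw, hmw⟩

/-- The mask of the numbers `a + b` with `a` among the first values of `x² + 5y²` and `b` among
those of `2P₈(t)`; all such numbers below `2500` are included. -/
def ternaryMask : ℕ :=
  sumsetMask
    (sumsetMask (sumsetMask 1 ((List.range 50).map fun x ↦ x ^ 2))
      ((List.range 23).map fun y ↦ 5 * y ^ 2))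
    ((List.range 42).map fun t ↦ (2 * octagonal (t - 20)).toNat)

theorem exists_of_testBit_ternaryMask {m : ℕ} (h : ternaryMask.testBit m) :
    ∃ x y t : ℤ, x ^ 2 + 5 * y ^ 2 + 2 * octagonal t = m := by
  obtain ⟨m₁, h₁, _, ht, rfl⟩ := exists_of_testBit_sumsetMask h
  obtain ⟨m₂, h₂, _, hy, rfl⟩ := exists_of_testBit_sumsetMask h₁
  obtain ⟨m₃, h₃, _, hx, rfl⟩ := exists_of_testBit_sumsetMask h₂
  obtain ⟨t, -, rfl⟩ := List.mem_map.mp ht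
  obtain ⟨y, -, rfl⟩ := List.mem_map.mp hy
  obtain ⟨x, -, rfl⟩ := List.mem_map.mp hx
  obtain rfl : m₃ = 0 := Nat.testBit_one_eq_true_iff_self_eq_zero.mp h₃
  refine ⟨x, y, t - 20, ?_⟩
  have := octagonal_nonneg (t - 20)
  push_cast
  lia

theorem testBit_of_mod_two_pow_eq {A b n : ℕ} (hA : A % 2 ^ b = 2 ^ b - 1) (hn : n < b) :
    A.testBit n := by
  have := Nat.testBit_mod_two_pow A b n
  rw [hA, Nat.testBit_two_pow_sub_one] at this
  simpa [hn] using this.symm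

set_option exponentiation.threshold 300 in
theorem isThreeSqOneOctagonal_of_lt {α N : ℕ} (hα : α ∈ Finset.Icc 5 12) (hN : N < 300) :
    IsThreeSqOneOctagonal α N := by
  have table : ∀ α ∈ Finset.Icc 5 12,
      sumsetMask ternaryMask ((List.range 8).map fun z ↦ α * z ^ 2) % 2 ^ 300 = 2 ^ 300 - 1 := by
    decide +kernel
  obtain ⟨m, hm, v, hv, rfl⟩ :=
    exists_of_testBit_sumsetMask (testBit_of_mod_two_pow_eq (table α hα) hN)
  obtain ⟨z, -, rfl⟩ := List.mem_map.mp hv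
  obtain ⟨x, y, t, hxyt⟩ := exists_of_testBit_ternaryMask hm
  exact ⟨x, y, z, t, by push_cast; linarith⟩

set_option exponentiation.threshold 2500 in
theorem isTwoSqTwoOctagonal_of_lt {β N : ℕ} (hβ : β ∈ Finset.Icc 2 12) (hN : N < 2500) :
    IsTwoSqTwoOctagonal β N := by
  have table : ∀ β ∈ Finset.Icc 2 12,
      sumsetMask ternaryMask ((List.range 42).map fun t ↦ β * (octagonal (t - 20)).toNat) % 2 ^ 2500
        = 2 ^ 2500 - 1 := by
    decide +kernel
  obtain ⟨m, hm, v, hv, rfl⟩ :=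
    exists_of_testBit_sumsetMask (testBit_of_mod_two_pow_eq (table β hβ) hN)
  obtain ⟨t, -, rfl⟩ := List.mem_map.mp hv
  obtain ⟨x, y, z, hxyz⟩ := exists_of_testBit_ternaryMask hm
  refine ⟨x, y, z, t - 20, ?_⟩
  push_cast
  rw [Int.toNat_of_nonneg (octagonal_nonneg _)]
  linarith

/-! ### Odd coefficients and even numbers -/

theorem isThreeSqOneOctagonal_of_odd_or_even {α N : ℕ} (hα : α ∈ Finset.Icc 5 12)
    (hN : 300 ≤ N) (h : α % 2 = 1 ∨ N % 2 = 0) : IsThreeSqOneOctagonal α N := by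
  have table : ∀ α ∈ Finset.Icc 5 12, ∀ r < 256, α % 2 = 1 ∨ r % 2 = 0 →
      ∃ z < 6, IsAdmissible ((r : ℕ) - (α : ℕ) * (z : ℕ) ^ 2) := by
    decide +kernel
  obtain ⟨z, hz, hadm⟩ := table α hα (N % 256) (Nat.mod_lt _ (by simp)) (by lia)
  refine isThreeSqOneOctagonal_of_isAdmissible (z := z) (hadm.of_emod_eq ?_) ?_
  · lia
  · have : α * z ^ 2 ≤ 12 * 5 ^ 2 :=
      Nat.mul_le_mul (Finset.mem_Icc.mp hα).2 (Nat.pow_le_pow_left (by lia) 2)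
    exact_mod_cast (show α * z ^ 2 ≤ N by lia)

theorem isTwoSqTwoOctagonal_of_odd_or_even_of_mod_ne {β N : ℕ} (hβ : β ∈ Finset.Icc 2 12)
    (hN : 192 ≤ N) (h : β % 2 = 1 ∨ N % 2 = 0) (h10 : β ≠ 10 ∨ N % 256 ≠ 252) :
    IsTwoSqTwoOctagonal β N := by
  have table : ∀ β ∈ Finset.Icc 2 12, ∀ r < 256, β % 2 = 1 ∨ r % 2 = 0 → β ≠ 10 ∨ r ≠ 252 →
      ∃ t ∈ [0, 1, -1, 2, -2], IsAdmissible ((r : ℕ) - (β : ℕ) * octagonal t) := by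
    decide +kernel
  obtain ⟨t, ht, hadm⟩ := table β hβ (N % 256) (Nat.mod_lt _ (by simp)) (by lia) (by lia)
  refine isTwoSqTwoOctagonal_of_isAdmissible (t := t) (hadm.of_emod_eq ?_) ?_
  · lia
  · have octagonal_le : ∀ t ∈ [0, 1, -1, 2, -2], octagonal t ≤ 16 := by decide
    have := (Finset.mem_Icc.mp hβ).2
    nlinarith [octagonal_le t ht]

-- Completing squares gives `3N + 2 + β = 3x² + 15y² + 2(3z - 1)² + β(3t - 1)²`, in which all four
-- bases can be doubled.
theorem IsTwoSqTwoOctagonal.of_eq_four_mul {β M N : ℤ} (hM : IsTwoSqTwoOctagonal β M)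
    (h : 3 * N + 2 + β = 4 * (3 * M + 2 + β)) : IsTwoSqTwoOctagonal β N := by
  obtain ⟨x, y, z, t, rfl⟩ := hM
  obtain ⟨z', hz⟩ := exists_three_mul_octagonal_add_one (u := 2 * (3 * z - 1)) (by lia)
  obtain ⟨t', ht⟩ := exists_three_mul_octagonal_add_one (u := 2 * (3 * t - 1)) (by lia)
  rw [mul_pow, ← three_mul_octagonal_add_one] at hz ht
  refine ⟨2 * x, 2 * y, z', t', mul_left_cancel₀ three_ne_zero ?_⟩
  linear_combination 2 * hz + β * ht - h

theorem isTwoSqTwoOctagonal_of_odd_or_even {β N : ℕ} (hβ : β ∈ Finset.Icc 2 12)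
    (h : β % 2 = 1 ∨ N % 2 = 0) : IsTwoSqTwoOctagonal β N := by
  induction N using Nat.strong_induction_on with
  | _ N ih =>
    by_cases hN : N < 2500
    · exact isTwoSqTwoOctagonal_of_lt hβ hN
    by_cases h10 : β = 10 ∧ N % 256 = 252
    · obtain ⟨rfl, hmod⟩ := h10
      exact (ih ((N - 12) / 4) (by lia) (by lia)).of_eq_four_mul (by lia)
    · exact isTwoSqTwoOctagonal_of_odd_or_even_of_mod_ne hβ (by lia) h (by lia)

/-! ### Auxiliary representations by sums of squares -/

-- Multiply `x + y√-m` by an element `u ± v√-m` of norm `9`; for one of the signs the result is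
-- prime to `3`.
theorem exists_eq_nine_mul_and_not_three_dvd {m u v x y : ℤ} (h9 : u ^ 2 + m * v ^ 2 = 9)
    (hu : ¬ 3 ∣ u) (hv : ¬ 3 ∣ v) (hxy : ¬ (3 ∣ x ∧ 3 ∣ y)) :
    ∃ x' y' : ℤ, x' ^ 2 + m * y' ^ 2 = 9 * (x ^ 2 + m * y ^ 2) ∧ ¬ 3 ∣ y' := by
  have hux : 3 ∣ v * x ↔ 3 ∣ x := by simp [Int.prime_three.dvd_mul, hv]
  have huy : 3 ∣ u * y ↔ 3 ∣ y := by simp [Int.prime_three.dvd_mul, hu]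
  by_cases h : 3 ∣ v * x + u * y
  · exact ⟨u * x + m * v * y, v * x - u * y,
      by linear_combination (x ^ 2 + m * y ^ 2) * h9, by lia⟩
  · exact ⟨u * x - m * v * y, v * x + u * y,
      by linear_combination (x ^ 2 + m * y ^ 2) * h9, h⟩

theorem exists_sq_add_mul_sq_eq_and_not_three_dvd {m u v X Y : ℤ} (h9 : u ^ 2 + m * v ^ 2 = 9)
    (hu : ¬ 3 ∣ u) (hv : ¬ 3 ∣ v) (hXY : X ≠ 0 ∨ Y ≠ 0) (h3 : 3 ∣ X ↔ 3 ∣ Y) :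
    ∃ X' Y' : ℤ, X' ^ 2 + m * Y' ^ 2 = X ^ 2 + m * Y ^ 2 ∧ ¬ 3 ∣ Y' := by
  induction hn : X.natAbs + Y.natAbs using Nat.strong_induction_on generalizing X Y with
  | _ n ih =>
    by_cases hY : 3 ∣ Y
    · obtain ⟨x, rfl⟩ := h3.mpr hY
      obtain ⟨y, rfl⟩ := hY
      obtain ⟨x', y', hnorm, hxy'⟩ :
          ∃ x' y' : ℤ, x' ^ 2 + m * y' ^ 2 = x ^ 2 + m * y ^ 2 ∧ ¬ (3 ∣ x' ∧ 3 ∣ y') := by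
        by_cases hxy : 3 ∣ x ∧ 3 ∣ y
        · obtain ⟨x', y', hnorm, hy'⟩ := ih _ (by lia) (X := x) (Y := y) (by lia) (by lia) rfl
          exact ⟨x', y', hnorm, fun h ↦ hy' h.2⟩
        · exact ⟨x, y, rfl, hxy⟩
      obtain ⟨X', Y', hX', hY'⟩ := exists_eq_nine_mul_and_not_three_dvd h9 hu hv hxy'
      exact ⟨X', Y', by rw [hX', hnorm]; ring, hY'⟩
    · exact ⟨X, Y, rfl, hY⟩

theorem six_mul_sq_add_five_sq_of_three_dvd_iff {p j : ℤ} (h2 : p % 2 = j % 2)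
    (h3 : 3 ∣ p ↔ 3 ∣ j) : ∃ x y : ℤ, 6 * (x ^ 2 + 5 * y ^ 2) = p ^ 2 + 5 * j ^ 2 := by
  obtain ⟨p', hp', hp2, hp3⟩ := exists_sq_eq_and_three_dvd_sub (x := p) (y := -j) (by lia)
  obtain ⟨y, rfl⟩ : ∃ y, p' = 6 * y - j := ⟨(p' + j) / 6, by lia⟩
  exact ⟨j - y, y, by rw [← hp']; ring⟩

theorem exists_sum_three_sq_eq_three_sq_add_six_sq_add_two_sq {a b c : ℤ} (h2 : a % 2 = b % 2)
    (h6 : 6 ∣ a + b + 2 * c) : ∃ x v w : ℤ, a + b + 2 * c = 6 * v ∧ a - b = 2 * w ∧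
      a ^ 2 + b ^ 2 + c ^ 2 = 3 * x ^ 2 + 6 * v ^ 2 + 2 * w ^ 2 := by
  obtain ⟨v, hv⟩ := h6
  obtain ⟨w, hw⟩ : 2 ∣ a - b := by lia
  obtain rfl : a = b + 2 * w := by lia
  obtain rfl : c = 3 * v - b - w := by lia
  exact ⟨b + w - v, v, w, hv, hw, by ring⟩

theorem not_three_dvd_of_sum_three_sq {a b c : ℤ} (h3 : 3 ∣ a ^ 2 + b ^ 2 + c ^ 2)
    (h9 : ¬ 9 ∣ a ^ 2 + b ^ 2 + c ^ 2) : ¬ 3 ∣ a ∧ ¬ 3 ∣ b ∧ ¬ 3 ∣ c := by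
  by_contra hdvd
  have hall : 3 ∣ a ∧ 3 ∣ b ∧ 3 ∣ c := by
    have := sq_emod_three a
    have := sq_emod_three b
    have := sq_emod_three c
    lia
  obtain ⟨⟨a, rfl⟩, ⟨b, rfl⟩, c, rfl⟩ := hall
  exact h9 ⟨a ^ 2 + b ^ 2 + c ^ 2, by ring⟩

theorem exists_four_sq_add_four_sq_add_sq {k : ℤ} (hk₀ : 0 ≤ k) (hk : k % 4 = 1) :
    ∃ a b c : ℤ, 4 * a ^ 2 + 4 * b ^ 2 + c ^ 2 = k := by
  obtain ⟨a, b, c, h⟩ := exists_sum_three_sq hk₀ (by lia)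
  have := sq_emod_sixteen a
  have := sq_emod_sixteen b
  have := sq_emod_sixteen c
  have of_even {a b c : ℤ} (h : a ^ 2 + b ^ 2 + c ^ 2 = k) (ha : 2 ∣ a) (hb : 2 ∣ b) :
      ∃ a b c : ℤ, 4 * a ^ 2 + 4 * b ^ 2 + c ^ 2 = k := by
    obtain ⟨a, rfl⟩ := ha
    obtain ⟨b, rfl⟩ := hb
    exact ⟨a, b, c, by linarith⟩
  rcases (by lia : (2 ∣ a ∧ 2 ∣ b) ∨ (2 ∣ a ∧ 2 ∣ c) ∨ (2 ∣ b ∧ 2 ∣ c)) with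
    ⟨ha, hb⟩ | ⟨ha, hc⟩ | ⟨hb, hc⟩
  · exact of_even h ha hb
  · exact of_even (a := a) (b := c) (c := b) (by linarith) ha hc
  · exact of_even (a := b) (b := c) (c := a) (by linarith) hb hc

theorem exists_four_sq_add_four_sq_add_sq_not_three_dvd {k : ℤ} (hk₀ : 0 ≤ k) (hk : k % 4 = 1)
    (hk3 : 3 ∣ k) (hk9 : ¬ 9 ∣ k) : ∃ a b c : ℤ, 4 * a ^ 2 + 4 * b ^ 2 + c ^ 2 = k ∧
      c % 2 = 1 ∧ ¬ 3 ∣ a ∧ ¬ 3 ∣ b ∧ ¬ 3 ∣ c := by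
  obtain ⟨a, b, c, rfl⟩ := exists_four_sq_add_four_sq_add_sq hk₀ hk
  have hsum : (2 * a) ^ 2 + (2 * b) ^ 2 + c ^ 2 = 4 * a ^ 2 + 4 * b ^ 2 + c ^ 2 := by ring
  have h3 := not_three_dvd_of_sum_three_sq (a := 2 * a) (b := 2 * b) (c := c)
    (by rwa [hsum]) (by rwa [hsum])
  have := sq_emod_sixteen c
  exact ⟨a, b, c, rfl, by lia, by lia, by lia, by lia⟩

theorem exists_sum_three_odd_sq_of_emod_eight_eq_three {k : ℤ} (hk₀ : 0 ≤ k) (hk8 : k % 8 = 3)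
    (hk3 : k % 3 = 2) : ∃ a b c : ℤ, a ^ 2 + b ^ 2 + c ^ 2 = k ∧
      a % 2 = 1 ∧ b % 2 = 1 ∧ c % 2 = 1 ∧ 3 ∣ a ∧ ¬ 3 ∣ b ∧ 3 ∣ c - b := by
  obtain ⟨a, b, c, h⟩ := exists_sum_three_sq hk₀ (by lia)
  obtain ⟨a, b, c, h, ha⟩ : ∃ a b c : ℤ, a ^ 2 + b ^ 2 + c ^ 2 = k ∧ 3 ∣ a := by
    have := sq_emod_three a
    have := sq_emod_three b
    have := sq_emod_three c
    rcases (by lia : 3 ∣ a ∨ 3 ∣ b ∨ 3 ∣ c) with ha | hb | hc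
    · exact ⟨a, b, c, h, ha⟩
    · exact ⟨b, a, c, by linarith, hb⟩
    · exact ⟨c, b, a, by linarith, hc⟩
  have hbc : ¬ 3 ∣ b ∧ ¬ 3 ∣ c := by
    have := sq_emod_three a
    have := sq_emod_three b
    have := sq_emod_three c
    lia
  obtain ⟨c', hc', hc2, hcb⟩ := exists_sq_eq_and_three_dvd_sub (x := c) (y := b) (by lia)
  have hodd : a % 2 = 1 ∧ b % 2 = 1 ∧ c % 2 = 1 := by
    have := sq_emod_sixteen a
    have := sq_emod_sixteen b
    have := sq_emod_sixteen c
    lia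
  exact ⟨a, b, c', by linarith, hodd.1, hodd.2.1, by lia, ha, hbc.1, hcb⟩

theorem not_isSquare_or_not_isSquare_sub {k d : ℤ} (hd₀ : 0 < d) (hd : d % 2 = 0)
    (hk : (d + 4) ^ 2 < 16 * k) : ¬ IsSquare k ∨ ¬ IsSquare (k - d) := by
  by_contra! ⟨⟨s, hs⟩, r, hr⟩
  have hlt : |r| < |s| := abs_lt_iff_mul_self_lt.mpr (by linarith)
  have hpar : |s| % 2 = |r| % 2 := by
    have := sq_emod_sixteen s
    have := sq_emod_sixteen r
    grind
  have hgap : |r| + 2 ≤ |s| := by lia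
  have hr₀ := abs_nonneg r
  rw [← abs_mul_abs_self] at hs hr
  have hsd : 4 * |s| ≤ d + 4 := by nlinarith
  nlinarith

/-! ### Even coefficients and odd numbers: three squares and an octagonal number -/

theorem exists_sq_add_four_sq_add_thirty_six_sq {k : ℤ} (hk₀ : 0 ≤ k) (hk4 : k % 4 = 1)
    (hk3 : k % 3 = 2) : ∃ p w z : ℤ, p ^ 2 + 4 * w ^ 2 + 36 * z ^ 2 = k ∧ ¬ 3 ∣ p ∧ ¬ 3 ∣ w := by
  suffices h : ∃ a b c : ℤ, 4 * a ^ 2 + 4 * b ^ 2 + c ^ 2 = k ∧ ¬ 3 ∣ c by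
    obtain ⟨a, b, c, h, hc⟩ := h
    have := sq_emod_three a
    have := sq_emod_three b
    have := sq_emod_three c
    rcases (by lia : (3 ∣ a ∧ ¬ 3 ∣ b) ∨ (3 ∣ b ∧ ¬ 3 ∣ a)) with ⟨⟨z, rfl⟩, hb⟩ | ⟨⟨z, rfl⟩, ha⟩
    · exact ⟨c, b, z, by linarith, hc, hb⟩
    · exact ⟨c, a, z, by linarith, hc, ha⟩
  obtain ⟨a, b, c, h⟩ := exists_four_sq_add_four_sq_add_sq hk₀ hk4
  by_cases hc : 3 ∣ c
  · obtain ⟨p, q, h, hp⟩ : ∃ p q : ℤ, 2 * p ^ 2 + 2 * q ^ 2 + c ^ 2 = k ∧ 3 ∣ p := by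
      have := sq_emod_three a
      have := sq_emod_three b
      have := sq_emod_three c
      rcases (by lia : 3 ∣ a + b ∨ 3 ∣ a - b) with hp | hp
      · exact ⟨a + b, a - b, by linarith, hp⟩
      · exact ⟨a - b, a + b, by linarith, hp⟩
    obtain ⟨p', c', hpc, hc'⟩ : ∃ p' c' : ℤ,
        c' ^ 2 + 2 * p' ^ 2 = c ^ 2 + 2 * p ^ 2 ∧ ¬ 3 ∣ c' := by
      have := sq_emod_sixteen c
      obtain ⟨c', p', hpc, hp'⟩ := exists_sq_add_mul_sq_eq_and_not_three_dvd (m := 2) (u := 1)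
        (v := 2) (X := c) (Y := p) (by norm_num) (by norm_num) (by norm_num) (by lia) (by lia)
      have := sq_emod_three c
      have := sq_emod_three p
      have := sq_emod_three c'
      have := sq_emod_three p'
      exact ⟨p', c', hpc, by lia⟩
    obtain ⟨b', rfl⟩ : ∃ b', p' = q + 2 * b' := ⟨(p' - q) / 2, by
      have := sq_emod_sixteen c'
      have := sq_emod_sixteen p'
      have := sq_emod_sixteen q
      lia⟩
    exact ⟨q + b', b', c', by linarith, hc'⟩
  · exact ⟨a, b, c, h, hc⟩

theorem isThreeSqOneOctagonal_six_of_odd {N : ℤ} (hN₀ : 0 ≤ N) (hN : N % 2 = 1) :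
    IsThreeSqOneOctagonal 6 N := by
  obtain ⟨p, w, z, h, hp, hw⟩ :=
    exists_sq_add_four_sq_add_thirty_six_sq (k := 6 * N - 1) (by lia) (by lia) (by lia)
  have := sq_emod_sixteen p
  obtain ⟨x, y, hxy⟩ := six_mul_sq_add_five_sq_of_three_dvd_iff (p := p) (j := 1) (by lia) (by lia)
  obtain ⟨t, ht⟩ := exists_three_mul_octagonal_add_one hw
  exact ⟨x, y, z, t, by linarith⟩

theorem isThreeSqOneOctagonal_eight_of_sum_three_sq {N a b c y : ℤ}
    (h : a ^ 2 + b ^ 2 + c ^ 2 = 3 * N + 2 - 15 * y ^ 2) (h2 : a % 2 = b % 2)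
    (h12 : 12 ∣ a + b + 2 * c) (h3 : ¬ 3 ∣ a - b) : IsThreeSqOneOctagonal 8 N := by
  obtain ⟨x, v, w, hv, hw, hxvw⟩ :=
    exists_sum_three_sq_eq_three_sq_add_six_sq_add_two_sq (c := c) h2 (by lia)
  obtain ⟨z, rfl⟩ : 2 ∣ v := by lia
  obtain ⟨t, ht⟩ := exists_three_mul_octagonal_add_one (u := w) (by lia)
  exact ⟨x, y, z, t, by linarith⟩

theorem isThreeSqOneOctagonal_eight_of_emod_eight_eq_three {N y : ℤ}
    (hk₀ : 0 ≤ 3 * N + 2 - 15 * y ^ 2) (hk : (3 * N + 2 - 15 * y ^ 2) % 8 = 3) :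
    IsThreeSqOneOctagonal 8 N := by
  obtain ⟨a, b, c, h, ha, hb, hc, ha3, hb3, hbc⟩ :=
    exists_sum_three_odd_sq_of_emod_eight_eq_three hk₀ hk (by lia)
  rcases (by lia : 4 ∣ a + b + 2 * c ∨ 4 ∣ -a + b + 2 * c) with h4 | h4
  · exact isThreeSqOneOctagonal_eight_of_sum_three_sq h (by lia) (by lia) (by lia)
  · exact isThreeSqOneOctagonal_eight_of_sum_three_sq (a := -a) (b := b) (c := c) (y := y)
      (by rwa [neg_sq]) (by lia) (by lia) (by lia)

theorem isThreeSqOneOctagonal_eight_of_emod_eight_eq_five {N y : ℤ}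
    (hk₀ : 0 ≤ 3 * N + 2 - 15 * y ^ 2) (hk : (3 * N + 2 - 15 * y ^ 2) % 8 = 5) :
    IsThreeSqOneOctagonal 8 N := by
  obtain ⟨a, b, c, h⟩ := exists_four_sq_add_four_sq_add_sq hk₀ (by lia)
  have hpar : (a + b) % 2 = 1 ∧ c % 2 = 1 := by
    have := sq_emod_sixteen a
    have := sq_emod_sixteen b
    have := sq_emod_sixteen c
    lia
  have := sq_emod_three a
  have := sq_emod_three b
  have := sq_emod_three c
  rcases (by lia : (3 ∣ c ∧ ¬ 3 ∣ a ∧ ¬ 3 ∣ b) ∨ (¬ 3 ∣ c ∧ ¬ 3 ∣ a + b)) with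
    ⟨hc, ha, hb⟩ | ⟨hc, hab⟩
  · obtain ⟨a', ha', ha2, hab⟩ := exists_sq_eq_and_three_dvd_sub (x := a) (y := -b) (by lia)
    exact isThreeSqOneOctagonal_eight_of_sum_three_sq (a := 2 * a') (b := 2 * b) (c := c) (y := y)
      (by linarith) (by lia) (by lia) (by lia)
  · obtain ⟨c', hc', hc2, hcab⟩ :=
      exists_sq_eq_and_three_dvd_sub (x := c) (y := 2 * (a + b)) (by lia)
    exact isThreeSqOneOctagonal_eight_of_sum_three_sq (a := 2 * a) (b := 2 * b) (c := c') (y := y)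
      (by linarith) (by lia) (by lia) (by lia)

theorem isThreeSqOneOctagonal_eight_of_odd {N : ℤ} (hN₀ : 20 ≤ N) (hN : N % 2 = 1) :
    IsThreeSqOneOctagonal 8 N := by
  obtain ⟨y, hk₀, hk⟩ : ∃ y : ℤ, 0 ≤ 3 * N + 2 - 15 * y ^ 2 ∧
      ((3 * N + 2 - 15 * y ^ 2) % 8 = 3 ∨ (3 * N + 2 - 15 * y ^ 2) % 8 = 5) := by
    by_cases h : (3 * N + 2) % 8 = 3 ∨ (3 * N + 2) % 8 = 5
    · exact ⟨0, by lia, by lia⟩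
    · exact ⟨2, by lia, by lia⟩
  rcases hk with hk | hk
  · exact isThreeSqOneOctagonal_eight_of_emod_eight_eq_three hk₀ hk
  · exact isThreeSqOneOctagonal_eight_of_emod_eight_eq_five hk₀ hk

theorem isThreeSqOneOctagonal_ten_of_odd {N : ℤ} (hN₀ : 16 ≤ N) (hN : N % 2 = 1) :
    IsThreeSqOneOctagonal 10 N := by
  obtain ⟨t, hk₀, hk5⟩ : ∃ t, 0 ≤ N - 2 * octagonal t ∧
      ((N - 2 * octagonal t) % 5 = 1 ∨ (N - 2 * octagonal t) % 5 = 4) := by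
    simp only [octagonal]
    rcases (by lia : N % 5 = 1 ∨ N % 5 = 4 ∨ N % 5 = 3 ∨ N % 5 = 0 ∨ N % 5 = 2) with
      h | h | h | h | h
    · exact ⟨0, by lia, by lia⟩
    · exact ⟨0, by lia, by lia⟩
    · exact ⟨1, by lia, by lia⟩
    · exact ⟨2, by lia, by lia⟩
    · exact ⟨2, by lia, by lia⟩
  obtain ⟨x, y, z, h⟩ := exists_sq_add_five_sq_add_ten_sq hk₀ (by lia) hk5
  exact ⟨x, y, z, t, by linarith⟩

theorem exists_three_sq_add_two_sq_add_sq_of_sum_three_sq {k a b c : ℤ}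
    (h : 2 * (a ^ 2 + b ^ 2 + c ^ 2) = 3 * k) :
    ∃ x w r : ℤ, 3 * x ^ 2 + 2 * w ^ 2 + r ^ 2 = k := by
  have h3 : (3 ∣ a ↔ 3 ∣ b) ∧ (3 ∣ a ↔ 3 ∣ c) := by
    have := sq_emod_three a
    have := sq_emod_three b
    have := sq_emod_three c
    lia
  obtain ⟨b', hb', -, hab⟩ := exists_sq_eq_and_three_dvd_sub (x := b) (y := a) (by lia)
  obtain ⟨c', hc', -, hac⟩ := exists_sq_eq_and_three_dvd_sub (x := c) (y := -a) (by lia)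
  rw [← hb', ← hc'] at h
  obtain ⟨x, rfl⟩ : ∃ x, a = b' + 3 * x := ⟨(a - b') / 3, by lia⟩
  obtain ⟨w, rfl⟩ : ∃ w, c' = 2 * b' + 3 * x - 3 * w := ⟨(2 * b' + 3 * x - c') / 3, by lia⟩
  exact ⟨x, w, 2 * b' + 3 * x - 2 * w, by linarith⟩

theorem exists_three_sq_add_sq_eq_and_even {x r : ℤ} (hr : r % 3 = 0) (hpar : x % 2 = r % 2) :
    ∃ x' r' : ℤ, 3 * x' ^ 2 + r' ^ 2 = 3 * x ^ 2 + r ^ 2 ∧ r' % 3 = 0 ∧ r' % 2 = 0 := by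
  by_cases hr2 : r % 2 = 0
  · exact ⟨x, r, rfl, hr, hr2⟩
  wlog h4 : (r - 3 * x) % 4 = 0 generalizing x
  · simpa using this (x := -x) (by lia) (by lia)
  obtain ⟨m, rfl⟩ : ∃ m, r = 3 * x + 4 * m := ⟨(r - 3 * x) / 4, by lia⟩
  exact ⟨2 * x + 2 * m, 2 * m, by ring, by lia, by lia⟩

theorem exists_three_sq_add_two_sq_add_thirty_six_sq {k a b c : ℤ}
    (h : 2 * (a ^ 2 + b ^ 2 + c ^ 2) = 3 * k) (hk2 : k % 2 = 0) (hk3 : k % 3 = 2) :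
    ∃ x w z : ℤ, 3 * x ^ 2 + 2 * w ^ 2 + 36 * z ^ 2 = k ∧ ¬ 3 ∣ w := by
  obtain ⟨x, w, r, hxwr⟩ := exists_three_sq_add_two_sq_add_sq_of_sum_three_sq h
  have hmod3 : ¬ 3 ∣ w ∧ r % 3 = 0 := by
    have := sq_emod_three w
    have := sq_emod_three r
    lia
  have hpar : x % 2 = r % 2 := by
    have := sq_emod_sixteen x
    have := sq_emod_sixteen r
    lia
  obtain ⟨x', r', hxr, hr3, hr2⟩ := exists_three_sq_add_sq_eq_and_even hmod3.2 hpar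
  obtain ⟨z, rfl⟩ : ∃ z, r' = 6 * z := ⟨r' / 6, by lia⟩
  exact ⟨x', w, z, by linarith, hmod3.1⟩

theorem exists_two_mul_sum_three_sq_eq_three_mul {k : ℤ} (hk₀ : 0 ≤ k)
    (hk : (k % 4 = 2 ∧ k % 16 ≠ 10) ∨ k % 8 = 4 ∨ (k % 16 = 8 ∧ k % 64 ≠ 40)) :
    ∃ a b c : ℤ, 2 * (a ^ 2 + b ^ 2 + c ^ 2) = 3 * k := by
  by_cases h8 : k % 8 = 0
  · obtain ⟨a, b, c, h⟩ := exists_sum_three_sq (k := 3 * (k / 8)) (by lia) (by lia)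
    exact ⟨2 * a, 2 * b, 2 * c, by lia⟩
  · obtain ⟨a, b, c, h⟩ := exists_sum_three_sq (k := 3 * (k / 2)) (by lia) (by lia)
    exact ⟨a, b, c, by lia⟩

theorem isThreeSqOneOctagonal_twelve_of_odd {N : ℤ} (hN₀ : 245 ≤ N) (hN : N % 2 = 1) :
    IsThreeSqOneOctagonal 12 N := by
  obtain ⟨y, k, hk, hk₀, hmod⟩ : ∃ y k : ℤ, k = 3 * N + 2 - 15 * y ^ 2 ∧ 0 ≤ k ∧
      ((k % 4 = 2 ∧ k % 16 ≠ 10) ∨ k % 8 = 4 ∨ (k % 16 = 8 ∧ k % 64 ≠ 40)) := by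
    by_contra! hnot
    have h1 := hnot 1 _ rfl (by lia)
    have h3 := hnot 3 _ rfl (by lia)
    have h5 := hnot 5 _ rfl (by lia)
    have h7 := hnot 7 _ rfl (by lia)
    omega
  obtain ⟨a, b, c, h⟩ := exists_two_mul_sum_three_sq_eq_three_mul hk₀ hmod
  obtain ⟨x, w, z, hxwz, hw⟩ :=
    exists_three_sq_add_two_sq_add_thirty_six_sq h (by lia) (by lia)
  obtain ⟨t, ht⟩ := exists_three_mul_octagonal_add_one hw
  exact ⟨x, y, z, t, by linarith⟩

/-! ### Even coefficients and odd numbers: two squares and two octagonal numbers -/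

theorem isTwoSqTwoOctagonal_of_six_mul_add {β N p j w v : ℤ}
    (h : p ^ 2 + 5 * j ^ 2 + 4 * w ^ 2 + 2 * β * v ^ 2 = 6 * N + 4 + 2 * β) (h2 : p % 2 = j % 2)
    (h3 : 3 ∣ p ↔ 3 ∣ j) (hw : ¬ 3 ∣ w) (hv : ¬ 3 ∣ v) : IsTwoSqTwoOctagonal β N := by
  obtain ⟨x, y, hxy⟩ := six_mul_sq_add_five_sq_of_three_dvd_iff h2 h3
  obtain ⟨z, hz⟩ := exists_three_mul_octagonal_add_one hw
  obtain ⟨t, ht⟩ := exists_three_mul_octagonal_add_one hv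
  refine ⟨x, y, z, t, mul_left_cancel₀ (by norm_num : (6 : ℤ) ≠ 0) ?_⟩
  linear_combination hxy + 4 * hz + 2 * β * ht + h

theorem isTwoSqTwoOctagonal_two_of_odd {N : ℤ} (hN₀ : 20 ≤ N) (hN : N % 2 = 1) :
    IsTwoSqTwoOctagonal 2 N := by
  obtain ⟨j, hj, hj3, hk₀, hk9⟩ : ∃ j : ℤ, j % 2 = 1 ∧ ¬ 3 ∣ j ∧ 0 ≤ 6 * N + 8 - 5 * j ^ 2 ∧
      ¬ 9 ∣ 6 * N + 8 - 5 * j ^ 2 := by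
    by_cases h : N % 3 = 1
    · exact ⟨5, by lia, by lia, by lia, by lia⟩
    · exact ⟨1, by lia, by lia, by lia, by lia⟩
  have := sq_emod_three j
  have := sq_emod_sixteen j
  obtain ⟨w, v, p, h, hp, hw3, hv3, hp3⟩ :=
    exists_four_sq_add_four_sq_add_sq_not_three_dvd hk₀ (by lia) (by lia) hk9
  exact isTwoSqTwoOctagonal_of_six_mul_add (p := p) (j := j) (w := w) (v := v)
    (by linarith) (by lia) (by lia) hw3 hv3

theorem exists_sq_add_four_sq_add_eight_sq {k : ℤ} (hk₀ : 0 ≤ k) (hk : k % 4 = 1) :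
    ∃ p w v : ℤ, p ^ 2 + 4 * w ^ 2 + 8 * v ^ 2 = k := by
  have of_odd {a b c : ℤ} (h : a ^ 2 + b ^ 2 + c ^ 2 = 2 * k) (ha : a % 2 = 1) (hb : b % 2 = 1)
      (hc : c % 4 = 0) : ∃ p w v : ℤ, p ^ 2 + 4 * w ^ 2 + 8 * v ^ 2 = k := by
    wlog hab : (a - b) % 4 = 0 generalizing b
    · exact this (b := -b) (by linarith) (by lia) (by lia)
    obtain ⟨w, rfl⟩ : ∃ w, a = b + 4 * w := ⟨(a - b) / 4, by lia⟩
    obtain ⟨v, rfl⟩ : ∃ v, c = 4 * v := ⟨c / 4, by lia⟩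
    exact ⟨b + 2 * w, w, v, by linarith⟩
  obtain ⟨a, b, c, h⟩ := exists_sum_three_sq (k := 2 * k) (by lia) (by lia)
  have := sq_emod_sixteen a
  have := sq_emod_sixteen b
  have := sq_emod_sixteen c
  rcases (by lia : (a % 2 = 1 ∧ b % 2 = 1 ∧ c % 4 = 0) ∨ (a % 2 = 1 ∧ c % 2 = 1 ∧ b % 4 = 0) ∨
    (b % 2 = 1 ∧ c % 2 = 1 ∧ a % 4 = 0)) with ⟨ha, hb, hc⟩ | ⟨ha, hc, hb⟩ | ⟨hb, hc, ha⟩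
  · exact of_odd h ha hb hc
  · exact of_odd (a := a) (b := c) (c := b) (by linarith) ha hc hb
  · exact of_odd (a := b) (b := c) (c := a) (by linarith) hb hc ha

theorem exists_sq_add_four_sq_add_eight_sq_not_three_dvd {k : ℤ} (hk₀ : 0 ≤ k) (hk4 : k % 4 = 1)
    (hk3 : k % 3 = 1) (hsq : ¬ IsSquare k) : ∃ p w v : ℤ, p ^ 2 + 4 * w ^ 2 + 8 * v ^ 2 = k ∧
      ¬ 3 ∣ p ∧ ¬ 3 ∣ w ∧ ¬ 3 ∣ v := by
  obtain ⟨p, w, v, rfl⟩ := exists_sq_add_four_sq_add_eight_sq hk₀ hk4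
  have := sq_emod_three p
  have := sq_emod_three w
  have := sq_emod_three v
  rcases (by lia : (¬ 3 ∣ p ∧ ¬ 3 ∣ w ∧ ¬ 3 ∣ v) ∨ (3 ∣ p ∧ ¬ 3 ∣ w ∧ 3 ∣ v) ∨
    (¬ 3 ∣ p ∧ 3 ∣ w ∧ 3 ∣ v)) with hndvd | ⟨hp, hw, hv⟩ | ⟨hp, hw, hv⟩
  · exact ⟨p, w, v, rfl, hndvd⟩
  · have := sq_emod_sixteen p
    obtain ⟨p', v', hpv, hv'⟩ := exists_sq_add_mul_sq_eq_and_not_three_dvd (m := 2) (u := 1)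
      (v := 2) (X := p) (Y := 2 * v) (by norm_num) (by norm_num) (by norm_num) (by lia) (by lia)
    have := sq_emod_three p'
    have := sq_emod_three v'
    have := sq_emod_sixteen p'
    have := sq_emod_sixteen v'
    obtain ⟨v', rfl⟩ : 2 ∣ v' := by lia
    exact ⟨p', w, v', by linarith, by lia, hw, by lia⟩
  · have hwv : w ≠ 0 ∨ v ≠ 0 := by
      by_contra! ⟨hw₀, hv₀⟩
      exact hsq ⟨p, by rw [hw₀, hv₀]; ring⟩
    obtain ⟨w', v', heq, hv'⟩ := exists_sq_add_mul_sq_eq_and_not_three_dvd (m := 2) (u := 1)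
      (v := 2) (by norm_num) (by norm_num) (by norm_num) hwv (by lia)
    have := sq_emod_three w'
    have := sq_emod_three v'
    exact ⟨p, w', v', by linarith, hp, by lia, hv'⟩

theorem isTwoSqTwoOctagonal_four_of_odd {N : ℤ} (hN₀ : 160 ≤ N) (hN : N % 2 = 1) :
    IsTwoSqTwoOctagonal 4 N := by
  obtain ⟨j, hj, hj3, hk₀, hsq⟩ : ∃ j : ℤ, j % 2 = 1 ∧ ¬ 3 ∣ j ∧ 0 ≤ 6 * N + 12 - 5 * j ^ 2 ∧
      ¬ IsSquare (6 * N + 12 - 5 * j ^ 2) := by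
    rcases not_isSquare_or_not_isSquare_sub (k := 6 * N + 7) (d := 120) (by lia) (by lia) (by lia)
      with h | h
    · exact ⟨1, by lia, by lia, by lia, by convert h using 2; ring⟩
    · exact ⟨5, by lia, by lia, by lia, by convert h using 2; ring⟩
  have := sq_emod_three j
  have := sq_emod_sixteen j
  obtain ⟨p, w, v, h, hp, hw, hv⟩ :=
    exists_sq_add_four_sq_add_eight_sq_not_three_dvd hk₀ (by lia) (by lia) hsq
  have := sq_emod_sixteen p
  exact isTwoSqTwoOctagonal_of_six_mul_add (p := p) (j := j) (w := w) (v := v)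
    (by linarith) (by lia) (by lia) hw hv

theorem isTwoSqTwoOctagonal_six_of_emod_four_eq_three {N : ℤ} (hN₀ : 0 ≤ N) (hN : N % 4 = 3) :
    IsTwoSqTwoOctagonal 6 N := by
  obtain ⟨p, a, j, h⟩ := exists_sq_add_sq_add_five_sq (k := 6 * N - 11) (by lia) (by lia) (by lia)
  have := sq_emod_sixteen p
  have := sq_emod_sixteen a
  have := sq_emod_sixteen j
  have := sq_emod_three p
  have := sq_emod_three a
  have := sq_emod_three j
  wlog h3 : ¬ 3 ∣ a ∧ (3 ∣ p ↔ 3 ∣ j) generalizing p a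
  · exact this a p (by linarith) ‹_› ‹_› ‹_› ‹_› (by lia)
  wlog ha4 : a % 4 = 1 generalizing a
  · exact this (-a) (by linarith) (by lia) (by lia) (by lia) (by lia)
  obtain ⟨v, rfl⟩ : ∃ v, a = 4 * v - 3 := ⟨(a + 3) / 4, by lia⟩
  exact isTwoSqTwoOctagonal_of_six_mul_add (p := p) (j := j) (w := v - 3) (v := v)
    (by linarith) (by lia) h3.2 (by lia) (by lia)

theorem isTwoSqTwoOctagonal_six_of_sum_three_sq {N a b c y : ℤ}
    (h : a ^ 2 + b ^ 2 + c ^ 2 = 3 * N + 8 - 15 * y ^ 2) (h2 : a % 2 = b % 2)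
    (h6 : 6 ∣ a + b + 2 * c) (h9 : ¬ 9 ∣ a + b + 2 * c) (h3 : ¬ 3 ∣ a - b) :
    IsTwoSqTwoOctagonal 6 N := by
  obtain ⟨x, v, w, hv, hw, hxvw⟩ :=
    exists_sum_three_sq_eq_three_sq_add_six_sq_add_two_sq h2 h6
  obtain ⟨z, hz⟩ := exists_three_mul_octagonal_add_one (u := w) (by lia)
  obtain ⟨t, ht⟩ := exists_three_mul_octagonal_add_one (u := v) (by lia)
  exact ⟨x, y, z, t, by linarith⟩

theorem isTwoSqTwoOctagonal_six_of_emod_four_eq_one {N : ℤ} (hN₀ : 20 ≤ N) (hN : N % 4 = 1) :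
    IsTwoSqTwoOctagonal 6 N := by
  obtain ⟨y, hk₀, hk⟩ : ∃ y : ℤ, 0 ≤ 3 * N + 8 - 15 * y ^ 2 ∧
      (3 * N + 8 - 15 * y ^ 2) % 8 = 3 := by
    by_cases h : N % 8 = 1
    · exact ⟨0, by lia, by lia⟩
    · exact ⟨2, by lia, by lia⟩
  obtain ⟨a, b, c, h, ha, hb, hc, ha3, hb3, hbc⟩ :=
    exists_sum_three_odd_sq_of_emod_eight_eq_three hk₀ hk (by lia)
  rcases (by lia : ¬ 9 ∣ a + b + 2 * c ∨ ¬ 9 ∣ -a + b + 2 * c ∨ ¬ 9 ∣ a + c + 2 * b) with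
    h9 | h9 | h9
  · exact isTwoSqTwoOctagonal_six_of_sum_three_sq h (by lia) (by lia) h9 (by lia)
  · exact isTwoSqTwoOctagonal_six_of_sum_three_sq (a := -a) (b := b) (c := c) (y := y)
      (by linarith) (by lia) (by lia) h9 (by lia)
  · exact isTwoSqTwoOctagonal_six_of_sum_three_sq (a := a) (b := c) (c := b) (y := y)
      (by linarith) (by lia) (by lia) h9 (by lia)

-- If `a` and `b` are odd, the reflection of `(2a, 2b, c)` in the plane orthogonal to `(1, 1, 1)`
-- makes the first coordinate divisible by `4`.
theorem exists_sq_add_four_sq_add_sixteen_sq_not_three_dvd {k : ℤ} (hk₀ : 0 ≤ k) (hk : k % 4 = 1)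
    (hk3 : 3 ∣ k) (hk9 : ¬ 9 ∣ k) : ∃ p w v : ℤ, p ^ 2 + 4 * w ^ 2 + 16 * v ^ 2 = k ∧
      p % 2 = 1 ∧ ¬ 3 ∣ p ∧ ¬ 3 ∣ w ∧ ¬ 3 ∣ v := by
  obtain ⟨a, b, c, h, hc, ha3, hb3, hc3⟩ :=
    exists_four_sq_add_four_sq_add_sq_not_three_dvd hk₀ hk hk3 hk9
  by_cases ha : 2 ∣ a
  · obtain ⟨v, rfl⟩ := ha
    exact ⟨c, b, v, by linarith, hc, hc3, hb3, by lia⟩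
  by_cases hb : 2 ∣ b
  · obtain ⟨v, rfl⟩ := hb
    exact ⟨c, a, v, by linarith, hc, hc3, ha3, by lia⟩
  obtain ⟨a', ha', ha2, hac⟩ := exists_sq_eq_and_three_dvd_sub (x := a) (y := -c) (by lia)
  obtain ⟨b', hb', hb2, hbc⟩ := exists_sq_eq_and_three_dvd_sub (x := b) (y := -c) (by lia)
  obtain ⟨s, hs⟩ : 3 ∣ 2 * a' + 2 * b' + c := by lia
  obtain ⟨v, hv⟩ : 2 ∣ a' - s := by lia
  have hreflect : (c - 2 * s) ^ 2 + (2 * (b' - s)) ^ 2 + (4 * v) ^ 2 = k := by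
    rw [show 4 * v = 2 * (a' - s) by lia]
    linear_combination h + 4 * ha' + 4 * hb' - 4 * s * hs
  have h3 := not_three_dvd_of_sum_three_sq (by rwa [hreflect]) (by rwa [hreflect])
  exact ⟨c - 2 * s, b' - s, v, by linarith, by lia, by lia, by lia, by lia⟩

theorem isTwoSqTwoOctagonal_eight_of_odd {N : ℤ} (hN₀ : 20 ≤ N) (hN : N % 2 = 1) :
    IsTwoSqTwoOctagonal 8 N := by
  obtain ⟨j, hj, hj3, hk₀, hk9⟩ : ∃ j : ℤ, j % 2 = 1 ∧ ¬ 3 ∣ j ∧ 0 ≤ 6 * N + 20 - 5 * j ^ 2 ∧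
      ¬ 9 ∣ 6 * N + 20 - 5 * j ^ 2 := by
    by_cases h : N % 3 = 2
    · exact ⟨5, by lia, by lia, by lia, by lia⟩
    · exact ⟨1, by lia, by lia, by lia, by lia⟩
  have := sq_emod_three j
  have := sq_emod_sixteen j
  obtain ⟨p, w, v, h, hp, hp3, hw3, hv3⟩ :=
    exists_sq_add_four_sq_add_sixteen_sq_not_three_dvd hk₀ (by lia) (by lia) hk9
  exact isTwoSqTwoOctagonal_of_six_mul_add (p := p) (j := j) (w := w) (v := v)
    (by linarith) (by lia) (by lia) hw3 hv3

theorem isTwoSqTwoOctagonal_ten_of_sq_add_sq_add_five_sq {N x w y c : ℤ}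
    (h : x ^ 2 + w ^ 2 + 5 * y ^ 2 = N + 4 - 5 * c ^ 2) (hw : w % 2 = c % 2) (hc : ¬ 3 ∣ c) :
    IsTwoSqTwoOctagonal 10 N := by
  wlog hwc : ¬ 3 ∣ w - c generalizing w
  · exact this (w := -w) (by linarith) (by lia) (by lia)
  obtain ⟨v, rfl⟩ : ∃ v, w = c + 2 * v := ⟨(w - c) / 2, by lia⟩
  obtain ⟨z, hz⟩ := exists_three_mul_octagonal_add_one (u := v + 3 * c) (by lia)
  obtain ⟨t, ht⟩ := exists_three_mul_octagonal_add_one (u := v) (by lia)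
  exact ⟨x, y, z, t, by linarith⟩

theorem isTwoSqTwoOctagonal_ten_of_odd {N : ℤ} (hN₀ : 16 ≤ N) (hN : N % 2 = 1) :
    IsTwoSqTwoOctagonal 10 N := by
  obtain ⟨c, hk₀, hc3, hmod⟩ : ∃ c : ℤ, 0 ≤ N + 4 - 5 * c ^ 2 ∧ ¬ 3 ∣ c ∧
      (c % 2 = 1 ∧ (N + 4 - 5 * c ^ 2) % 4 = 2 ∨ c % 2 = 0 ∧ (N + 4 - 5 * c ^ 2) % 4 = 1) := by
    by_cases h : N % 4 = 3
    · exact ⟨1, by lia, by lia, by lia⟩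
    · exact ⟨2, by lia, by lia, by lia⟩
  obtain ⟨x, w, y, h⟩ := exists_sq_add_sq_add_five_sq hk₀ (by lia) (by lia)
  have hpar : w % 2 = c % 2 ∨ x % 2 = c % 2 := by
    have := sq_emod_sixteen x
    have := sq_emod_sixteen w
    have := sq_emod_sixteen y
    lia
  rcases hpar with hw | hx
  · exact isTwoSqTwoOctagonal_ten_of_sq_add_sq_add_five_sq h hw hc3
  · exact isTwoSqTwoOctagonal_ten_of_sq_add_sq_add_five_sq (x := w) (w := x) (y := y) (by linarith)
      hx hc3

theorem exists_sq_add_five_sq_add_four_sq_not_three_dvd {k : ℤ} (hk₀ : 0 ≤ k) (hk : k % 12 = 1)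
    (hsq : ¬ IsSquare k) : ∃ x y v : ℤ, x ^ 2 + 5 * y ^ 2 + 4 * v ^ 2 = k ∧ ¬ 3 ∣ v := by
  obtain ⟨a, b, c, h⟩ := exists_sq_add_sq_add_five_sq hk₀ (by lia) (by lia)
  have := sq_emod_three a
  have := sq_emod_three b
  have := sq_emod_three c
  have := sq_emod_sixteen a
  have := sq_emod_sixteen b
  have := sq_emod_sixteen c
  wlog hb : 2 ∣ b ∧ (¬ 3 ∣ b ∨ 2 ∣ c ∧ 3 ∣ c) generalizing a b
  · exact this b a (by linarith) ‹_› ‹_› ‹_› ‹_› (by lia)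
  obtain ⟨⟨v, rfl⟩, hb3 | ⟨⟨y, rfl⟩, hc3⟩⟩ := hb
  · exact ⟨a, c, v, by linarith, by lia⟩
  by_cases hv : 3 ∣ v
  · have hvy : v ≠ 0 ∨ y ≠ 0 := by
      by_contra! ⟨hv₀, hy₀⟩
      exact hsq ⟨a, by rw [← h, hv₀, hy₀]; ring⟩
    obtain ⟨v', y', heq, hy'⟩ := exists_sq_add_mul_sq_eq_and_not_three_dvd (m := 5) (u := 2)
      (v := 1) (by norm_num) (by norm_num) (by norm_num) hvy (by lia)
    have := sq_emod_three v
    have := sq_emod_three y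
    have := sq_emod_three v'
    have := sq_emod_three y'
    exact ⟨a, 2 * y', v', by linarith, by lia⟩
  · exact ⟨a, 2 * y, v, by linarith, hv⟩

theorem exists_sub_two_octagonal_emod_twelve_eq_one_not_isSquare {N : ℤ} (hN₀ : 2500 ≤ N)
    (hN : N % 2 = 1) : ∃ z, 0 ≤ N + 4 - 2 * octagonal z ∧ (N + 4 - 2 * octagonal z) % 12 = 1 ∧
      ¬ IsSquare (N + 4 - 2 * octagonal z) := by
  obtain ⟨z₁, z₂, hlt, hle, hmod₁, hmod₂⟩ : ∃ z₁ z₂, octagonal z₁ < octagonal z₂ ∧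
      octagonal z₂ ≤ 96 ∧ (N + 4 - 2 * octagonal z₁) % 12 = 1 ∧
      (N + 4 - 2 * octagonal z₂) % 12 = 1 := by
    simp only [octagonal]
    rcases (by lia : N % 12 = 1 ∨ N % 12 = 3 ∨ N % 12 = 5 ∨ N % 12 = 7 ∨ N % 12 = 9 ∨
      N % 12 = 11) with h | h | h | h | h | h
    · exact ⟨2, -4, by lia, by lia, by lia, by lia⟩
    · exact ⟨3, -3, by lia, by lia, by lia, by lia⟩
    · exact ⟨-2, 4, by lia, by lia, by lia, by lia⟩
    · exact ⟨-1, 5, by lia, by lia, by lia, by lia⟩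
    · exact ⟨0, 6, by lia, by lia, by lia, by lia⟩
    · exact ⟨1, -5, by lia, by lia, by lia, by lia⟩
  have h₀ := octagonal_nonneg z₁
  rcases not_isSquare_or_not_isSquare_sub (k := N + 4 - 2 * octagonal z₁)
    (d := 2 * octagonal z₂ - 2 * octagonal z₁) (by lia) (by lia) (by nlinarith) with h | h
  · exact ⟨z₁, by lia, hmod₁, h⟩
  · exact ⟨z₂, by lia, hmod₂, by convert h using 2; ring⟩

theorem isTwoSqTwoOctagonal_twelve_of_odd {N : ℤ} (hN₀ : 2500 ≤ N) (hN : N % 2 = 1) :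
    IsTwoSqTwoOctagonal 12 N := by
  obtain ⟨z, hk₀, hk, hsq⟩ := exists_sub_two_octagonal_emod_twelve_eq_one_not_isSquare hN₀ hN
  obtain ⟨x, y, v, h, hv⟩ := exists_sq_add_five_sq_add_four_sq_not_three_dvd hk₀ hk hsq
  obtain ⟨t, ht⟩ := exists_three_mul_octagonal_add_one hv
  exact ⟨x, y, z, t, by linarith⟩

/-! ### Universality -/

theorem isThreeSqOneOctagonal {α N : ℕ} (hα : α ∈ Finset.Icc 5 12) :
    IsThreeSqOneOctagonal α N := by
  by_cases hsmall : N < 300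
  · exact isThreeSqOneOctagonal_of_lt hα hsmall
  by_cases hpar : α % 2 = 1 ∨ N % 2 = 0
  · exact isThreeSqOneOctagonal_of_odd_or_even hα (by lia) hpar
  have hN : (N : ℤ) % 2 = 1 := by lia
  obtain rfl | rfl | rfl | rfl : α = 6 ∨ α = 8 ∨ α = 10 ∨ α = 12 := by
    rw [Finset.mem_Icc] at hα
    lia
  · exact isThreeSqOneOctagonal_six_of_odd (by lia) hN
  · exact isThreeSqOneOctagonal_eight_of_odd (by lia) hN
  · exact isThreeSqOneOctagonal_ten_of_odd (by lia) hN
  · exact isThreeSqOneOctagonal_twelve_of_odd (by lia) hN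

theorem isTwoSqTwoOctagonal {β N : ℕ} (hβ : β ∈ Finset.Icc 2 12) : IsTwoSqTwoOctagonal β N := by
  by_cases hsmall : N < 2500
  · exact isTwoSqTwoOctagonal_of_lt hβ hsmall
  by_cases hpar : β % 2 = 1 ∨ N % 2 = 0
  · exact isTwoSqTwoOctagonal_of_odd_or_even hβ hpar
  have hN : (N : ℤ) % 2 = 1 := by lia
  obtain rfl | rfl | rfl | rfl | rfl | rfl :
      β = 2 ∨ β = 4 ∨ β = 6 ∨ β = 8 ∨ β = 10 ∨ β = 12 := by
    rw [Finset.mem_Icc] at hβ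
    lia
  · exact isTwoSqTwoOctagonal_two_of_odd (by lia) hN
  · exact isTwoSqTwoOctagonal_four_of_odd (by lia) hN
  · rcases (by lia : (N : ℤ) % 4 = 3 ∨ (N : ℤ) % 4 = 1) with h | h
    · exact isTwoSqTwoOctagonal_six_of_emod_four_eq_three (by lia) h
    · exact isTwoSqTwoOctagonal_six_of_emod_four_eq_one (by lia) h
  · exact isTwoSqTwoOctagonal_eight_of_odd (by lia) hN
  · exact isTwoSqTwoOctagonal_ten_of_odd (by lia) hN
  · exact isTwoSqTwoOctagonal_twelve_of_odd (by lia) hN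

theorem universal_case_4_18 :
    (∀ α : ℤ, 5 ≤ α → α ≤ 12 → ∀ N : ℤ, 0 ≤ N →
      ∃ x y z t : ℤ,
        x ^ 2 + 5 * y ^ 2 + α * z ^ 2 + 2 * (3 * t ^ 2 - 2 * t) = N) ∧
    (∀ β : ℤ, 2 ≤ β → β ≤ 12 → ∀ N : ℤ, 0 ≤ N →
      ∃ x y z t : ℤ,
        x ^ 2 + 5 * y ^ 2 + 2 * (3 * z ^ 2 - 2 * z) + β * (3 * t ^ 2 - 2 * t) = N) := by
  refine ⟨fun α hα₅ hα₁₂ N hN ↦ ?_, fun β hβ₂ hβ₁₂ N hN ↦ ?_⟩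
  · lift α to ℕ using by lia
    lift N to ℕ using hN
    exact isThreeSqOneOctagonal (Finset.mem_Icc.mpr ⟨by lia, by lia⟩)
  · lift β to ℕ using by lia
    lift N to ℕ using hN
    exact isTwoSqTwoOctagonal (Finset.mem_Icc.mpr ⟨by lia, by lia⟩)
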